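/- arXiv:2212.03405 — 7 statements merged into one kernel-verified Lean document; each statement's English description precedes it below -/
import Mathlib

section
/- Let (a_k)_{k≥0} and (y_k)_{k≥0} be nonnegative real sequences such that ∑_{k=0}^∞ a_k < ∞, and let γ ∈ (0,1). Suppose there exists K ≥ 1 such that for all k ≥ K one has y_k ≤ ∑_{j=0}^{k-1} γ^{k-j} a_j y_j. Then there exists a constant C > 0 such that y_k ≤ C γ^k for all sufficiently large k. -/
open Filter

/-!
Dividing by `γ ^ k` turns the recursion into `z k ≤ T k` with `z k = y k / γ ^ k` and
`T k = ∑ j < k, a j * z j`. Then `T (k + 1) = T k + a k * z k ≤ (1 + a k) * T k`, so `T` grows at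
most like the products `∏ (1 + a i)`, which are bounded because `a` is summable.
-/

theorem sum_range_mul_le_mul_prod_one_add {R : Type*} [CommSemiring R] [PartialOrder R]
    [IsOrderedRing R] {a z : ℕ → R} {K : ℕ} (ha : ∀ k ≥ K, 0 ≤ a k)
    (hz : ∀ k ≥ K, z k ≤ ∑ j ∈ Finset.range k, a j * z j) {k : ℕ} (hk : K ≤ k) :
    ∑ j ∈ Finset.range k, a j * z j ≤
      (∑ j ∈ Finset.range K, a j * z j) * ∏ i ∈ Finset.Ico K k, (1 + a i) := by
  let T : ℕ → R := fun n ↦ ∑ j ∈ Finset.range n, a j * z j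
  have hstep : ∀ n ≥ K, T (n + 1) ≤ (1 + a n) * T n + 0 := fun n hn ↦
    calc T (n + 1)
      _ = T n + a n * z n := Finset.sum_range_succ _ n
      _ ≤ T n + a n * T n := by gcongr; exacts [ha n hn, hz n hn]
      _ = (1 + a n) * T n + 0 := by ring
  simpa [T] using discrete_gronwall_prod_general (b := 0) hstep
    (fun n hn ↦ add_nonneg zero_le_one (ha n hn)) hk

theorem norm_prod_one_add_le_exp_tsum_norm {ι R : Type*} [NormedCommRing R] [NormOneClass R]
    {f : ι → R} (hf : Summable fun i ↦ ‖f i‖) (s : Finset ι) :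
    ‖∏ i ∈ s, (1 + f i)‖ ≤ Real.exp (∑' i, ‖f i‖) :=
  calc ‖∏ i ∈ s, (1 + f i)‖
    _ ≤ ‖∏ i ∈ s, (1 + f i) - 1‖ + ‖(1 : R)‖ := norm_le_norm_sub_add _ 1
    _ ≤ Real.exp (∑ i ∈ s, ‖f i‖) := by
      rw [norm_one]
      exact le_sub_iff_add_le.mp (s.norm_prod_one_add_sub_one_le f)
    _ ≤ Real.exp (∑' i, ‖f i‖) :=
      Real.exp_le_exp.mpr (hf.sum_le_tsum s fun i _ ↦ norm_nonneg (f i))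

theorem isBoundedUnder_le_of_le_sum_range_mul {a z : ℕ → ℝ} (ha : ∀ᶠ k in atTop, 0 ≤ a k)
    (hsum : Summable a) (hz : ∀ᶠ k in atTop, z k ≤ ∑ j ∈ Finset.range k, a j * z j) :
    IsBoundedUnder (· ≤ ·) atTop z := by
  obtain ⟨K, hK⟩ := eventually_atTop.mp (ha.and hz)
  have haK : ∀ k ≥ K, 0 ≤ a k := fun k hk ↦ (hK k hk).1
  have hzK : ∀ k ≥ K, z k ≤ ∑ j ∈ Finset.range k, a j * z j := fun k hk ↦ (hK k hk).2
  refine isBoundedUnder_of_eventually_le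
    (a := ‖∑ j ∈ Finset.range K, a j * z j‖ * Real.exp (∑' i, ‖a i‖)) ?_
  filter_upwards [eventually_ge_atTop K] with k hk
  calc z k
    _ ≤ ∑ j ∈ Finset.range k, a j * z j := hzK k hk
    _ ≤ (∑ j ∈ Finset.range K, a j * z j) * ∏ i ∈ Finset.Ico K k, (1 + a i) :=
      sum_range_mul_le_mul_prod_one_add haK hzK hk
    _ ≤ ‖∑ j ∈ Finset.range K, a j * z j‖ * ‖∏ i ∈ Finset.Ico K k, (1 + a i)‖ :=
      (Real.le_norm_self _).trans (norm_mul_le _ _)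
    _ ≤ ‖∑ j ∈ Finset.range K, a j * z j‖ * Real.exp (∑' i, ‖a i‖) := by
      gcongr
      exact norm_prod_one_add_le_exp_tsum_norm hsum.norm _

theorem sum_range_pow_sub_mul_eq_pow_mul {F : Type*} [Field F] {γ : F} (hγ : γ ≠ 0)
    (a y : ℕ → F) (k : ℕ) :
    ∑ j ∈ Finset.range k, γ ^ (k - j) * a j * y j =
      γ ^ k * ∑ j ∈ Finset.range k, a j * (y j / γ ^ j) := by
  rw [Finset.mul_sum]
  refine Finset.sum_congr rfl fun j hj ↦ ?_
  rw [pow_sub₀ γ hγ (Finset.mem_range.mp hj).le]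
  ring

theorem sequence_lemma_general {a y : ℕ → ℝ} {γ : ℝ} (hγ : 0 < γ)
    (ha : ∀ᶠ k in atTop, 0 ≤ a k) (hsum : Summable a)
    (hrec : ∀ᶠ k in atTop, y k ≤ ∑ j ∈ Finset.range k, γ ^ (k - j) * a j * y j) :
    ∃ C > 0, ∀ᶠ k in atTop, y k ≤ C * γ ^ k := by
  have hz : ∀ᶠ k in atTop, y k / γ ^ k ≤ ∑ j ∈ Finset.range k, a j * (y j / γ ^ j) := by
    filter_upwards [hrec] with k hk
    rwa [div_le_iff₀' (pow_pos hγ k), ← sum_range_pow_sub_mul_eq_pow_mul hγ.ne']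
  obtain ⟨M, hM⟩ := (isBoundedUnder_le_of_le_sum_range_mul ha hsum hz).eventually_le
  refine ⟨max M 1, by positivity, ?_⟩
  filter_upwards [hM] with k hk
  exact (div_le_iff₀ (pow_pos hγ k)).mp (hk.trans (le_max_left M 1))

/-- **Technical sequence lemma.** If `(a_k)` and `(y_k)` are nonnegative sequences with
`∑ a_k < ∞`, `γ ∈ (0,1)`, and `y_k ≤ ∑_{j<k} γ^(k-j) a_j y_j` for all sufficiently large `k`,
then `y_k ≲ γ^k` for sufficiently large `k`. -/
theorem sequence_lemma (a y : ℕ → ℝ) (ha : ∀ k, 0 ≤ a k) (hy : ∀ k, 0 ≤ y k)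
    (hsum : Summable a) (γ : ℝ) (hγ : γ ∈ Set.Ioo (0 : ℝ) 1)
    (K : ℕ) (hK : 1 ≤ K)
    (hrec : ∀ k, K ≤ k → y k ≤ ∑ j ∈ Finset.range k, γ ^ (k - j) * a j * y j) :
    ∃ C > 0, ∀ᶠ k in atTop, y k ≤ C * γ ^ k := by
  refine sequence_lemma_general hγ.1 (.of_forall ha) hsum ?_
  exact eventually_atTop.mpr ⟨K, hrec⟩
end

section
/- There is an absolute constant C > 0 with the following property. Let t₀ ≥ 0 and let R, R₁ satisfy R ≥ 4R₁ > 0. Let g : (0,∞) → ℝ be measurable with ∫_0^∞ |g(s)|² s² ds < ∞ and g(s) = 0 for s outside (t₀+R, t₀+2R). Define u(r,t) := (1/(2r)) ∫_{r-t}^{r+t} h(s) ds for r > 0, t ∈ ℝ, where h(s) := s·g(|s|) (the odd extension of s·g(s)); this is the radial free wave in ℝ³ with initial data (0, u₁) where u₁(x) = g(|x|). Then ‖u‖_{Y(t₀+R₁, t₀+2R₁)} ≤ C (R₁/R)^{1/10} ( ∫_0^∞ |g(s)|² s² ds )^{1/2}. -/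
open MeasureTheory Set

/-- The channel norm `‖u‖_{Y(a,b)}` over the region `{(r,t) : |t|+a < r < |t|+b}`. -/
noncomputable def Ychannel (u : ℝ → ℝ → ℝ) (a b : ℝ) : ℝ :=
  (∫ t : ℝ, Real.sqrt (∫ r in Ioo (|t| + a) (|t| + b), |u r t| ^ 10 * r ^ 2)) ^ ((1 : ℝ) / 5)

/-!
Outside the light cone d'Alembert's formula gives `|u| ≤ ‖s g‖_{L¹} / (2r)`, and Cauchy–Schwarz
bounds `‖s g‖_{L¹}` by `R^{1/2}` times the energy norm. By finite speed of propagation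
`u(r,t) = 0` unless `r + |t| > t₀ + R`; for `r ≥ |t|` this forces `r ≥ R/2` as well, so
`r⁻⁴ ≲ R⁻² (R² + t²)⁻¹`. A channel of width `R₁` then gives
`‖u‖_Y⁵ ≲ R₁^{1/2} ‖s g‖_{L¹}⁵ ∫ R⁻² (R² + t²)⁻¹ dt`, and the last integral is of size `R⁻³`.
-/

section CauchySchwarz

variable {X : Type*} [MeasurableSpace X] {μ : Measure X} {f : X → ℝ} {A : Set X}

-- Integrability of `f ^ 2` makes `|f|`, but not `f` itself, a.e. strongly measurable.
theorem memLp_two_abs_of_integrable_sq (hf : Integrable (fun x => f x ^ 2) μ) :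
    MemLp (fun x => |f x|) 2 μ := by
  have hmeas : AEStronglyMeasurable (fun x => |f x|) μ := by
    simpa only [Real.sqrt_sq_eq_abs] using
      Real.continuous_sqrt.comp_aestronglyMeasurable hf.aestronglyMeasurable
  simpa only [memLp_two_iff_integrable_sq hmeas, sq_abs] using hf

theorem integral_abs_le_sqrt_measureReal_univ_mul_sqrt [IsFiniteMeasure μ]
    (hf : Integrable (fun x => f x ^ 2) μ) :
    ∫ x, |f x| ∂μ ≤ √(μ.real univ) * √(∫ x, f x ^ 2 ∂μ) := by
  have holder := integral_mul_le_Lp_mul_Lq_of_nonneg (μ := μ) Real.HolderConjugate.two_two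
    (f := fun _ => (1 : ℝ)) (g := fun x => |f x|)
    (.of_forall fun _ => zero_le_one) (.of_forall fun _ => abs_nonneg _)
    (memLp_const 1) (by simpa using memLp_two_abs_of_integrable_sq hf)
  simpa [Real.sqrt_eq_rpow] using holder

theorem integrable_abs_of_integrable_sq_of_support_subset (hA : μ A < ⊤)
    (hfA : f.support ⊆ A) (hf : Integrable (fun x => f x ^ 2) μ) :
    Integrable (fun x => |f x|) μ := by
  have : IsFiniteMeasure (μ.restrict A) := isFiniteMeasure_restrict.2 hA.ne
  rw [← integrableOn_iff_integrable_of_support_subset (by simpa using hfA)]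
  exact (memLp_two_abs_of_integrable_sq hf.integrableOn).integrable one_le_two

theorem integral_abs_le_sqrt_measureReal_mul_sqrt_of_support_subset (hA : μ A < ⊤)
    (hfA : f.support ⊆ A) (hf : Integrable (fun x => f x ^ 2) μ) :
    ∫ x, |f x| ∂μ ≤ √(μ.real A) * √(∫ x, f x ^ 2 ∂μ) := by
  have : IsFiniteMeasure (μ.restrict A) := isFiniteMeasure_restrict.2 hA.ne
  have hzero (x : X) (hx : x ∉ A) : f x = 0 := Function.notMem_support.1 fun h => hx (hfA h)
  calc ∫ x, |f x| ∂μ = ∫ x in A, |f x| ∂μ :=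
        (setIntegral_eq_integral_of_forall_compl_eq_zero fun x hx => by simp [hzero x hx]).symm
    _ ≤ √(μ.real A) * √(∫ x in A, f x ^ 2 ∂μ) := by
        simpa using integral_abs_le_sqrt_measureReal_univ_mul_sqrt hf.integrableOn
    _ = √(μ.real A) * √(∫ x, f x ^ 2 ∂μ) := by
        rw [setIntegral_eq_integral_of_forall_compl_eq_zero fun x hx => by simp [hzero x hx]]

end CauchySchwarz

section FreeWave

/-- The radial free wave in dimension three with initial data `(0, g(|x|))`. Since
`s ↦ s * g |s|` is the odd extension of `s ↦ s * g s`, only the values of `g` on `(0, ∞)` matter. -/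
noncomputable def radialFreeWave (g : ℝ → ℝ) (r t : ℝ) : ℝ :=
  (1 / (2 * r)) * ∫ s in (r - t)..(r + t), s * g |s|

variable {g : ℝ → ℝ} {r t ρ σ : ℝ}

theorem support_mul_id_subset {A : Set ℝ} (hsupp : ∀ s, s ∉ A → g s = 0) :
    (fun s => g s * s).support ⊆ A :=
  fun s hs => by_contra fun h => hs (by simp [hsupp s h])

theorem integrableOn_abs_mul_of_support_subset
    (hg : IntegrableOn (fun s => g s ^ 2 * s ^ 2) (Ioi 0))
    (hsupp : ∀ s, s ∉ Ioo ρ σ → g s = 0) :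
    IntegrableOn (fun s => |g s * s|) (Ioi 0) :=
  integrable_abs_of_integrable_sq_of_support_subset
    ((Measure.restrict_apply_le _ _).trans_lt measure_Ioo_lt_top) (support_mul_id_subset hsupp)
    (by simpa only [IntegrableOn, mul_pow] using hg)

theorem setIntegral_abs_mul_le_of_support_subset (hρσ : ρ ≤ σ)
    (hg : IntegrableOn (fun s => g s ^ 2 * s ^ 2) (Ioi 0))
    (hsupp : ∀ s, s ∉ Ioo ρ σ → g s = 0) :
    ∫ s in Ioi (0 : ℝ), |g s * s| ≤
      √(σ - ρ) * √(∫ s in Ioi (0 : ℝ), g s ^ 2 * s ^ 2) := by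
  have hfinite : volume.restrict (Ioi 0) (Ioo ρ σ) < ⊤ :=
    (Measure.restrict_apply_le _ _).trans_lt measure_Ioo_lt_top
  have hlength : (volume.restrict (Ioi 0)).real (Ioo ρ σ) ≤ σ - ρ :=
    (ENNReal.toReal_mono measure_Ioo_lt_top.ne (Measure.restrict_apply_le _ _)).trans_eq
      (Real.volume_real_Ioo_of_le hρσ)
  calc ∫ s in Ioi (0 : ℝ), |g s * s|
      ≤ √((volume.restrict (Ioi 0)).real (Ioo ρ σ)) * √(∫ s in Ioi (0 : ℝ), (g s * s) ^ 2) :=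
        integral_abs_le_sqrt_measureReal_mul_sqrt_of_support_subset hfinite
          (support_mul_id_subset hsupp) (by simpa only [IntegrableOn, mul_pow] using hg)
    _ ≤ √(σ - ρ) * √(∫ s in Ioi (0 : ℝ), g s ^ 2 * s ^ 2) := by
        simp only [mul_pow]
        gcongr

theorem uIoc_sub_add_subset_Ioc (hr : |t| ≤ r) :
    uIoc (r - t) (r + t) ⊆ Ioc 0 (r + |t|) := by
  have ht := abs_le.1 hr
  refine fun s hs => ⟨(le_min ?_ ?_).trans_lt hs.1, hs.2.trans (max_le ?_ ?_)⟩ <;>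
    linarith [neg_abs_le t, le_abs_self t]

theorem abs_radialFreeWave_le (hr : |t| ≤ r) (hg : IntegrableOn (fun s => |g s * s|) (Ioi 0)) :
    |radialFreeWave g r t| ≤ (∫ s in Ioi (0 : ℝ), |g s * s|) / (2 * r) := by
  have hr₀ : 0 ≤ r := (abs_nonneg t).trans hr
  have hsub : uIoc (r - t) (r + t) ⊆ Ioi 0 :=
    (uIoc_sub_add_subset_Ioc hr).trans Ioc_subset_Ioi_self
  have hintegral : |(∫ s in (r - t)..(r + t), s * g |s|)| ≤ ∫ s in Ioi (0 : ℝ), |g s * s| :=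
    calc |(∫ s in (r - t)..(r + t), s * g |s|)|
        ≤ ∫ s in uIoc (r - t) (r + t), |s * g (|s|)| :=
          intervalIntegral.norm_integral_le_integral_norm_uIoc (f := fun s => s * g |s|)
      _ = ∫ s in uIoc (r - t) (r + t), |g s * s| :=
          setIntegral_congr_fun measurableSet_uIoc fun s hs => by
            simp only [abs_of_pos (mem_Ioi.1 (hsub hs)), mul_comm]
      _ ≤ ∫ s in Ioi (0 : ℝ), |g s * s| :=
          setIntegral_mono_set hg (.of_forall fun s => abs_nonneg _) hsub.eventuallyLE
  rw [radialFreeWave, abs_mul, abs_of_nonneg (by positivity), one_div_mul_eq_div]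
  gcongr

theorem radialFreeWave_eq_zero (hr : |t| ≤ r) (hrρ : r + |t| ≤ ρ)
    (hg : ∀ s ∈ Ioc 0 ρ, g s = 0) : radialFreeWave g r t = 0 := by
  rw [radialFreeWave, intervalIntegral.integral_zero_ae (.of_forall fun s hs => ?_), mul_zero]
  have hs' := uIoc_sub_add_subset_Ioc hr hs
  rw [abs_of_pos hs'.1, hg s ⟨hs'.1, hs'.2.trans hrρ⟩, mul_zero]

end FreeWave

section Channel

variable {g : ℝ → ℝ} {r t a b ρ σ : ℝ}

theorem Ychannel_pow_five_le {u : ℝ → ℝ → ℝ} {F : ℝ → ℝ} (hab : a ≤ b) (hF : Integrable F)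
    (hF₀ : 0 ≤ F)
    (hu : ∀ t, ∀ r ∈ Ioo (|t| + a) (|t| + b), |u r t| ^ 10 * r ^ 2 ≤ F t ^ 2) :
    Ychannel u a b ^ 5 ≤ √(b - a) * ∫ t, F t := by
  have hslice (t : ℝ) :
      √(∫ r in Ioo (|t| + a) (|t| + b), |u r t| ^ 10 * r ^ 2) ≤ √(b - a) * F t := by
    rw [← Real.sqrt_sq (hF₀ t), ← Real.sqrt_mul (sub_nonneg.2 hab)]
    refine Real.sqrt_le_sqrt ((Real.le_norm_self _).trans
      ((norm_setIntegral_le_of_norm_le_const (C := F t ^ 2) measure_Ioo_lt_top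
        fun r hr => ?_).trans_eq ?_))
    · rw [Real.norm_of_nonneg (by positivity)]
      exact hu t r hr
    · rw [Real.volume_real_Ioo_of_le (by linarith), add_sub_add_left_eq_sub, mul_comm]
  have hpow : Ychannel u a b ^ 5 =
      ∫ t, √(∫ r in Ioo (|t| + a) (|t| + b), |u r t| ^ 10 * r ^ 2) := by
    rw [Ychannel, ← Real.rpow_mul_natCast (integral_nonneg fun _ => Real.sqrt_nonneg _)]
    norm_num
  rw [hpow, ← integral_const_mul]
  exact integral_mono_of_nonneg (.of_forall fun _ => Real.sqrt_nonneg _) (hF.const_mul _)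
    (.of_forall hslice)

theorem inv_pow_four_le_mul_inv_one_add_sq (hρ : 0 < ρ) (hρr : ρ ≤ 2 * r) (htr : |t| ≤ r) :
    (r ^ 4)⁻¹ ≤ 32 / ρ ^ 4 * (1 + (2 / ρ * t) ^ 2)⁻¹ := by
  have hr : 0 < r := by linarith
  have hρ_sq : ρ ^ 2 ≤ 4 * r ^ 2 := by nlinarith
  have ht_sq : t ^ 2 ≤ r ^ 2 := sq_le_sq.2 (by rwa [abs_of_pos hr])
  calc (r ^ 4)⁻¹ = 32 / (4 * r ^ 2 * (4 * r ^ 2 + 4 * r ^ 2)) := by field_simp; norm_num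
    _ ≤ 32 / (ρ ^ 2 * (ρ ^ 2 + 4 * t ^ 2)) := by gcongr
    _ = 32 / ρ ^ 4 * (1 + (2 / ρ * t) ^ 2)⁻¹ := by field_simp; ring

theorem abs_radialFreeWave_pow_ten_mul_sq_le (hρ : 0 < ρ) (htr : |t| ≤ r)
    (hint : IntegrableOn (fun s => |g s * s|) (Ioi 0)) (hg : ∀ s ∈ Ioc 0 ρ, g s = 0) :
    |radialFreeWave g r t| ^ 10 * r ^ 2 ≤
      ((∫ s in Ioi (0 : ℝ), |g s * s|) ^ 5 / ρ ^ 4 * (1 + (2 / ρ * t) ^ 2)⁻¹) ^ 2 := by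
  rcases le_or_gt (r + |t|) ρ with hrρ | hrρ
  · rw [radialFreeWave_eq_zero htr hrρ hg]
    simp only [abs_zero, ne_eq, OfNat.ofNat_ne_zero, not_false_eq_true, zero_pow, zero_mul]
    positivity
  set M := ∫ s in Ioi (0 : ℝ), |g s * s|
  have : 0 ≤ M := integral_nonneg fun _ => abs_nonneg _
  have hr : 0 < r := by linarith
  calc |radialFreeWave g r t| ^ 10 * r ^ 2 ≤ (M / (2 * r)) ^ 10 * r ^ 2 := by
        gcongr
        exact abs_radialFreeWave_le htr hint
    _ = (M ^ 5 / 32 * (r ^ 4)⁻¹) ^ 2 := by field_simp; norm_num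
    _ ≤ (M ^ 5 / 32 * (32 / ρ ^ 4 * (1 + (2 / ρ * t) ^ 2)⁻¹)) ^ 2 := by
        gcongr
        exact inv_pow_four_le_mul_inv_one_add_sq hρ (by linarith) htr
    _ = (M ^ 5 / ρ ^ 4 * (1 + (2 / ρ * t) ^ 2)⁻¹) ^ 2 := by ring

-- For `c = 0` both sides are junk values `0`.
theorem integral_inv_one_add_const_mul_sq (c : ℝ) :
    ∫ t : ℝ, (1 + (c * t) ^ 2)⁻¹ = Real.pi / |c| := by
  rw [Measure.integral_comp_mul_left (fun x : ℝ => (1 + x ^ 2)⁻¹), integral_univ_inv_one_add_sq,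
    abs_inv, smul_eq_mul, inv_mul_eq_div]

theorem Ychannel_radialFreeWave_pow_five_le (ha : 0 ≤ a) (hab : a ≤ b) (hρ : 0 < ρ)
    (hint : IntegrableOn (fun s => |g s * s|) (Ioi 0)) (hg : ∀ s ∈ Ioc 0 ρ, g s = 0) :
    Ychannel (radialFreeWave g) a b ^ 5 ≤
      Real.pi / 2 * √(b - a) * (∫ s in Ioi (0 : ℝ), |g s * s|) ^ 5 / ρ ^ 3 := by
  set M := ∫ s in Ioi (0 : ℝ), |g s * s|
  have : 0 ≤ M := integral_nonneg fun _ => abs_nonneg _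
  calc Ychannel (radialFreeWave g) a b ^ 5
      ≤ √(b - a) * ∫ t, M ^ 5 / ρ ^ 4 * (1 + (2 / ρ * t) ^ 2)⁻¹ := by
        refine Ychannel_pow_five_le hab ?_ (fun t => by positivity) fun t r hr => ?_
        · exact (integrable_inv_one_add_sq.comp_mul_left' (by positivity)).const_mul _
        · exact abs_radialFreeWave_pow_ten_mul_sq_le hρ (by linarith [hr.1]) hint hg
    _ = Real.pi / 2 * √(b - a) * M ^ 5 / ρ ^ 3 := by
        rw [integral_const_mul, integral_inv_one_add_const_mul_sq, abs_of_pos (by positivity)]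
        field_simp

theorem Ychannel_radialFreeWave_le (ha : 0 ≤ a) (hab : a ≤ b) (hρ : 0 < ρ) (hρσ : ρ ≤ σ)
    (hg : IntegrableOn (fun s => g s ^ 2 * s ^ 2) (Ioi 0))
    (hsupp : ∀ s, s ∉ Ioo ρ σ → g s = 0) :
    Ychannel (radialFreeWave g) a b ≤
      2 * ((b - a) / ρ) ^ ((1 : ℝ) / 10) * √((σ - ρ) / ρ)
        * √(∫ s in Ioi (0 : ℝ), g s ^ 2 * s ^ 2) := by
  have hba : 0 ≤ b - a := sub_nonneg.2 hab
  set N := √(∫ s in Ioi (0 : ℝ), g s ^ 2 * s ^ 2)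
  refine le_of_pow_le_pow_left₀ (n := 5) (by norm_num) (by positivity) ?_
  calc Ychannel (radialFreeWave g) a b ^ 5
      ≤ Real.pi / 2 * √(b - a) * (∫ s in Ioi (0 : ℝ), |g s * s|) ^ 5 / ρ ^ 3 :=
        Ychannel_radialFreeWave_pow_five_le ha hab hρ
          (integrableOn_abs_mul_of_support_subset hg hsupp)
          fun s hs => hsupp s fun h => h.1.not_ge hs.2
    _ ≤ 32 * √(b - a) * (√(σ - ρ) * N) ^ 5 / ρ ^ 3 := by
        gcongr
        · linarith [Real.pi_le_four]
        · exact setIntegral_abs_mul_le_of_support_subset hρσ hg hsupp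
    _ = 32 * √((b - a) / ρ) * √((σ - ρ) / ρ) ^ 5 * N ^ 5 := by
        have hρ_pow : ρ ^ 3 = √ρ * √ρ ^ 5 := by
          rw [← pow_succ', pow_mul (√ρ) 2 3, Real.sq_sqrt hρ.le]
        rw [hρ_pow, Real.sqrt_div hba, Real.sqrt_div (sub_nonneg.2 hρσ)]
        field_simp
    _ = (2 * ((b - a) / ρ) ^ ((1 : ℝ) / 10) * √((σ - ρ) / ρ) * N) ^ 5 := by
        have hroot : (((b - a) / ρ) ^ ((1 : ℝ) / 10)) ^ 5 = √((b - a) / ρ) := by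
          rw [← Real.rpow_mul_natCast (by positivity), Real.sqrt_eq_rpow]
          norm_num
        rw [mul_pow, mul_pow, mul_pow, hroot]
        norm_num

end Channel

theorem channel_by_nonlinear_preliminary_general :
    ∃ C > 0, ∀ t₀ R a b : ℝ, 0 ≤ t₀ → 0 < R → 0 ≤ a → a ≤ b →
      ∀ g : ℝ → ℝ,
      IntegrableOn (fun s => g s ^ 2 * s ^ 2) (Ioi 0) →
      (∀ s : ℝ, s ∉ Ioo (t₀ + R) (t₀ + 2 * R) → g s = 0) →
      Ychannel (radialFreeWave g) a b
        ≤ C * ((b - a) / R) ^ ((1 : ℝ) / 10)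
            * √(∫ s in Ioi (0 : ℝ), g s ^ 2 * s ^ 2) := by
  refine ⟨2, two_pos, fun t₀ R a b ht₀ hR ha hab g hg hsupp => ?_⟩
  have : 0 ≤ b - a := sub_nonneg.2 hab
  have hthin : √((t₀ + 2 * R - (t₀ + R)) / (t₀ + R)) ≤ 1 :=
    Real.sqrt_le_one.2 ((div_le_one (by linarith)).2 (by linarith))
  refine (Ychannel_radialFreeWave_le ha hab (by linarith) (by linarith) hg hsupp).trans ?_
  gcongr ?_ * √_
  calc 2 * ((b - a) / (t₀ + R)) ^ ((1 : ℝ) / 10) * √((t₀ + 2 * R - (t₀ + R)) / (t₀ + R))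
      ≤ 2 * ((b - a) / (t₀ + R)) ^ ((1 : ℝ) / 10) := mul_le_of_le_one_right (by positivity) hthin
    _ ≤ 2 * ((b - a) / R) ^ ((1 : ℝ) / 10) := by
        gcongr
        linarith

/-- **Channel decay for free waves with data `(0, u₁)` supported in a distant annulus.**
If `g` is radial `L²` data supported in `(t₀+R, t₀+2R)` with `R ≥ 4R₁ > 0`, then the free wave
`u(r,t) = (1/(2r)) ∫_{r-t}^{r+t} s·g(|s|) ds` satisfies
`‖u‖_{Y(t₀+R₁, t₀+2R₁)} ≤ C (R₁/R)^{1/10} (∫_0^∞ g(s)² s² ds)^{1/2}`. -/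
theorem channel_by_nonlinear_preliminary :
    ∃ C > 0, ∀ t₀ R R₁ : ℝ, 0 ≤ t₀ → 0 < R₁ → 4 * R₁ ≤ R →
      ∀ g : ℝ → ℝ,
      IntegrableOn (fun s => g s ^ 2 * s ^ 2) (Ioi 0) →
      (∀ s : ℝ, s ∉ Ioo (t₀ + R) (t₀ + 2 * R) → g s = 0) →
      Ychannel (fun r t => (1 / (2 * r)) * ∫ s in (r - t)..(r + t), s * g |s|)
          (t₀ + R₁) (t₀ + 2 * R₁)
        ≤ C * (R₁ / R) ^ ((1 : ℝ) / 10)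
            * Real.sqrt (∫ s in Ioi (0 : ℝ), g s ^ 2 * s ^ 2) := by
  obtain ⟨C, hC, h⟩ := channel_by_nonlinear_preliminary_general
  exact ⟨C, hC, fun t₀ R R₁ ht₀ hR₁ hR g hg hsupp =>
    (h t₀ R _ _ ht₀ (by linarith) (by linarith) (by linarith) g hg hsupp).trans_eq
      (by rw [show t₀ + 2 * R₁ - (t₀ + R₁) = R₁ by ring])⟩
end

section
/- There is an absolute constant C > 0 with the following property. Let f : (0,∞) → ℝ be locally absolutely continuous with lim_{r→∞} f(r) = 0 and D := ( ∫_0^∞ r² |f′(r)|² dr )^{1/2} < ∞. Viewing f as a time-independent function u(r,t) := f(r), its exterior norm satisfies ‖u‖_{Y(0,∞)} = ( ∫_{-∞}^{∞} ( ∫_{|t|}^{∞} |f(r)|^{10} r² dr )^{1/2} dt )^{1/5} ≤ C·D. -/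
open MeasureTheory Set

/-- The exterior norm `‖u‖_{Y(a,∞)}` over the region `{(r,t) : r > |t|+a}`. -/
noncomputable def Yext (u : ℝ → ℝ → ℝ) (a : ℝ) : ℝ :=
  (∫ t : ℝ, Real.sqrt (∫ r in Ioi (|t| + a), |u r t| ^ 10 * r ^ 2)) ^ ((1 : ℝ) / 5)

/-!
Write `H r = ∫_r^∞ |f'|`, so that `|f| ≤ H` and `H` is nonincreasing. A weighted Hölder
inequality bounds `H` pointwise, `r H(r)² ≤ D²`, and, with another power weight followed by
Tonelli's theorem, yields Hardy's inequality `∫_0^∞ H² ≤ 4 D²`. Splitting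
`H¹⁰ r² = (r H²)² · H⁴ · H²` gives `∫_t^∞ H¹⁰ r² dr ≤ D⁴ · H(t)⁴ · 4 D²`, whose square root
`2 D³ H(t)²` is integrated in `t` by Hardy's inequality again.
-/

open scoped ENNReal

section Lintegral

lemma lintegral_Ioi_rpow {q t : ℝ} (hq : q < -1) (ht : 0 < t) :
    ∫⁻ s in Ioi t, ENNReal.ofReal (s ^ q) = ENNReal.ofReal (-t ^ (q + 1) / (q + 1)) := by
  rw [← integral_Ioi_rpow_of_lt hq ht, ofReal_integral_eq_lintegral_ofReal
    (integrableOn_Ioi_rpow_of_lt hq ht)]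
  filter_upwards [ae_restrict_mem measurableSet_Ioi] with s hs
  exact Real.rpow_nonneg (ht.trans hs).le _

lemma lintegral_Ioo_rpow {q s : ℝ} (hq : -1 < q) (hs : 0 < s) :
    ∫⁻ t in Ioo 0 s, ENNReal.ofReal (t ^ q) = ENNReal.ofReal (s ^ (q + 1) / (q + 1)) := by
  have h : ∫ t in Ioo 0 s, t ^ q = s ^ (q + 1) / (q + 1) := by
    rw [← integral_Ioc_eq_integral_Ioo, ← intervalIntegral.integral_of_le hs.le,
      integral_rpow (Or.inl hq), Real.zero_rpow (by linarith), sub_zero]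
  rw [← h, ofReal_integral_eq_lintegral_ofReal
    ((intervalIntegral.integrableOn_Ioo_rpow_iff hs).2 hq)]
  filter_upwards [ae_restrict_mem measurableSet_Ioo] with t ht
  exact Real.rpow_nonneg ht.1.le _

lemma lintegral_comp_abs (g : ℝ → ℝ≥0∞) :
    ∫⁻ t : ℝ, g |t| = 2 * ∫⁻ t in Ioi (0 : ℝ), g t := by
  have h_pos : ∫⁻ t in Ioi (0 : ℝ), g |t| = ∫⁻ t in Ioi (0 : ℝ), g t :=
    setLIntegral_congr_fun measurableSet_Ioi fun t ht => by simp only [abs_of_pos (mem_Ioi.1 ht)]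
  have h_neg : ∫⁻ t in Iic (0 : ℝ), g |t| = ∫⁻ t in Ioi (0 : ℝ), g |t| := by
    have h := (Measure.measurePreserving_neg (volume : Measure ℝ)).setLIntegral_comp_preimage_emb
      (MeasurableEquiv.neg ℝ).measurableEmbedding (fun t => g |t|) (Ici 0)
    rw [← setLIntegral_congr (Ioi_ae_eq_Ici (a := (0 : ℝ)) (μ := volume))] at h
    simpa using h
  rw [← lintegral_add_compl _ (measurableSet_Ioi (a := (0 : ℝ))), compl_Ioi, h_neg, h_pos, two_mul]

lemma lintegral_mul_setLIntegral_Ioi {α : Type*} [TopologicalSpace α]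
    [SecondCountableTopology α] [LinearOrder α] [OrderClosedTopology α] [MeasurableSpace α]
    [OpensMeasurableSpace α] {μ ν : Measure α} [SFinite μ] [SFinite ν] {a b : α → ℝ≥0∞}
    (ha : AEMeasurable a μ) (hb : AEMeasurable b ν) :
    ∫⁻ t, a t * ∫⁻ s in Ioi t, b s ∂ν ∂μ = ∫⁻ s, (∫⁻ t in Iio s, a t ∂μ) * b s ∂ν := by
  set k : α × α → ℝ≥0∞ := {x | x.1 < x.2}.indicator fun x => a x.1 * b x.2
  have hkm : AEMeasurable k (μ.prod ν) :=
    (ha.comp_fst.mul hb.comp_snd).indicator (measurableSet_lt measurable_fst measurable_snd)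
  have h_left (t : α) : a t * ∫⁻ s in Ioi t, b s ∂ν = ∫⁻ s, k (t, s) ∂ν := by
    rw [← lintegral_const_mul'' _ hb.restrict, ← lintegral_indicator measurableSet_Ioi]
    rfl
  have h_right (s : α) : (∫⁻ t in Iio s, a t ∂μ) * b s = ∫⁻ t, k (t, s) ∂μ := by
    rw [← lintegral_mul_const'' _ ha.restrict, ← lintegral_indicator measurableSet_Iio]
    rfl
  simp only [h_left, h_right]
  exact lintegral_lintegral_swap hkm

lemma rpow_lintegral_le_lintegral_rpow_mul {α : Type*} [MeasurableSpace α] {μ : Measure α}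
    {w F : α → ℝ≥0∞} (hw : AEMeasurable w μ) (hF : AEMeasurable F μ)
    (hw_zero : ∀ᵐ x ∂μ, w x ≠ 0) (hw_top : ∀ᵐ x ∂μ, w x ≠ ∞) {p : ℝ} (hp : 1 ≤ p) :
    (∫⁻ x, F x ∂μ) ^ p ≤ (∫⁻ x, w x ∂μ) ^ (p - 1) * ∫⁻ x, w x ^ (1 - p) * F x ^ p ∂μ := by
  have hp0 : 0 < p := one_pos.trans_le hp
  have h_split : ∀ᵐ x ∂μ, F x = w x ^ (1 - p⁻¹) * (w x ^ (1 - p) * F x ^ p) ^ p⁻¹ := by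
    filter_upwards [hw_zero, hw_top] with x hx0 hx_top
    have h_exp : 1 - p⁻¹ + (1 - p) * p⁻¹ = 0 := by field_simp; ring
    rw [ENNReal.mul_rpow_of_nonneg _ _ (inv_nonneg.2 hp0.le), ENNReal.rpow_rpow_inv hp0.ne',
      ← ENNReal.rpow_mul, ← mul_assoc, ← ENNReal.rpow_add _ _ hx0 hx_top, h_exp,
      ENNReal.rpow_zero, one_mul]
  have h_holder : ∫⁻ x, F x ∂μ ≤
      (∫⁻ x, w x ∂μ) ^ (1 - p⁻¹) * (∫⁻ x, w x ^ (1 - p) * F x ^ p ∂μ) ^ p⁻¹ :=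
    (lintegral_congr_ae h_split).trans_le <|
      ENNReal.lintegral_mul_norm_pow_le hw ((hw.pow_const _).mul (hF.pow_const _))
        (sub_nonneg.2 (inv_le_one_of_one_le₀ hp)) (inv_nonneg.2 hp0.le) (sub_add_cancel _ _)
  refine (ENNReal.rpow_le_rpow h_holder hp0.le).trans_eq ?_
  rw [ENNReal.mul_rpow_of_nonneg _ _ hp0.le, ENNReal.rpow_inv_rpow hp0.ne', ← ENNReal.rpow_mul,
    sub_mul, inv_mul_cancel₀ hp0.ne', one_mul]

end Lintegral

/-- The tail integral `r ↦ ∫_r^∞ F`, the monotone majorant of `|f|` when `F = |f'|`. -/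
noncomputable def tail (F : ℝ → ℝ≥0∞) (r : ℝ) : ℝ≥0∞ := ∫⁻ s in Ioi r, F s

/-- The energy `∫_0^∞ s² F(s)² ds`, which for `F = |f'|` is `D²`, the squared `Ḣ¹(ℝ³)` norm
of `x ↦ f(|x|)` up to the factor `4π`. -/
noncomputable def radialEnergy (F : ℝ → ℝ≥0∞) : ℝ≥0∞ :=
  ∫⁻ s in Ioi (0 : ℝ), ENNReal.ofReal (s ^ 2) * F s ^ 2

/-- The `[0, ∞]`-valued counterpart of `Yext`, for which no integrability is needed. -/
noncomputable def eYext (u : ℝ → ℝ → ℝ≥0∞) (a : ℝ) : ℝ≥0∞ :=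
  (∫⁻ t : ℝ, (∫⁻ r in Ioi (|t| + a), u r t ^ 10 * ENNReal.ofReal (r ^ 2)) ^ (1 / 2 : ℝ))
    ^ (1 / 5 : ℝ)

section Tail

variable {F : ℝ → ℝ≥0∞}

lemma antitone_tail (F : ℝ → ℝ≥0∞) : Antitone (tail F) :=
  fun _ _ h => lintegral_mono_set (Ioi_subset_Ioi h)

lemma tail_rpow_le {t : ℝ} (ht : 0 < t) (hF : AEMeasurable F (volume.restrict (Ioi t)))
    {p β : ℝ} (hp : 1 ≤ p) (hβ : 0 < β) :
    tail F t ^ p ≤ ENNReal.ofReal (t ^ (-β) / β) ^ (p - 1) *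
      ∫⁻ s in Ioi t, ENNReal.ofReal (s ^ ((1 + β) * (p - 1))) * F s ^ p := by
  have h_weight : ∀ s ∈ Ioi t, ENNReal.ofReal (s ^ (-(1 + β))) ^ (1 - p) * F s ^ p =
      ENNReal.ofReal (s ^ ((1 + β) * (p - 1))) * F s ^ p := fun s hs => by
    have hs0 : 0 < s := ht.trans hs
    rw [ENNReal.ofReal_rpow_of_pos (by positivity), ← Real.rpow_mul hs0.le]
    ring_nf
  have h_mass : ∫⁻ s in Ioi t, ENNReal.ofReal (s ^ (-(1 + β))) = ENNReal.ofReal (t ^ (-β) / β) := by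
    rw [lintegral_Ioi_rpow (by linarith) ht, show -(1 + β) + 1 = -β by ring, neg_div_neg_eq]
  rw [← h_mass, ← setLIntegral_congr_fun measurableSet_Ioi h_weight]
  refine rpow_lintegral_le_lintegral_rpow_mul (by fun_prop) hF ?_
    (ae_of_all _ fun _ => ENNReal.ofReal_ne_top) hp
  filter_upwards [ae_restrict_mem measurableSet_Ioi] with s hs
  exact (ENNReal.ofReal_pos.2 (Real.rpow_pos_of_pos (ht.trans hs) _)).ne'

lemma ofReal_rpow_mul_tail_rpow_le {t : ℝ} (ht : 0 < t)
    (hF : AEMeasurable F (volume.restrict (Ioi t))) {p β : ℝ} (hp : 1 ≤ p) (hβ : 0 < β) :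
    ENNReal.ofReal (t ^ (β * p - 1)) * tail F t ^ p ≤
      ENNReal.ofReal (β ^ (1 - p)) * ENNReal.ofReal (t ^ (β - 1)) *
        ∫⁻ s in Ioi t, ENNReal.ofReal (s ^ ((1 + β) * (p - 1))) * F s ^ p := by
  have h_coeff : t ^ (β * p - 1) * (t ^ (-β) / β) ^ (p - 1) = β ^ (1 - p) * t ^ (β - 1) := by
    rw [Real.div_rpow (by positivity) hβ.le, ← Real.rpow_mul ht.le, div_eq_mul_inv,
      ← Real.rpow_neg hβ.le, neg_sub, ← mul_assoc, ← Real.rpow_add ht, mul_comm]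
    ring_nf
  rw [← ENNReal.ofReal_mul (by positivity), ← h_coeff, ENNReal.ofReal_mul (by positivity),
    ← ENNReal.ofReal_rpow_of_pos (x := t ^ (-β) / β) (by positivity), mul_assoc]
  gcongr
  exact tail_rpow_le ht hF hp hβ

/-- Hardy's inequality. The Hölder weight `s ^ (-(1 + β))` used for it is the one for which
Tonelli's theorem returns the sharp constant `β ^ (-p)`. -/
theorem lintegral_rpow_mul_tail_rpow_le (hF : AEMeasurable F (volume.restrict (Ioi 0)))
    {p β : ℝ} (hp : 1 ≤ p) (hβ : 0 < β) :
    ∫⁻ t in Ioi (0 : ℝ), ENNReal.ofReal (t ^ (β * p - 1)) * tail F t ^ p ≤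
      ENNReal.ofReal (β ^ (-p)) *
        ∫⁻ s in Ioi (0 : ℝ), ENNReal.ofReal (s ^ ((β + 1) * p - 1)) * F s ^ p := by
  set a : ℝ → ℝ≥0∞ := fun t => ENNReal.ofReal (β ^ (1 - p)) * ENNReal.ofReal (t ^ (β - 1))
  set b : ℝ → ℝ≥0∞ := fun s => ENNReal.ofReal (s ^ ((1 + β) * (p - 1))) * F s ^ p
  have hb : AEMeasurable b (volume.restrict (Ioi 0)) :=
    AEMeasurable.mul (by fun_prop) (hF.pow_const p)
  have h_inner : ∀ s ∈ Ioi (0 : ℝ), (∫⁻ t in Iio s, a t ∂volume.restrict (Ioi 0)) * b s =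
      ENNReal.ofReal (β ^ (-p)) * (ENNReal.ofReal (s ^ ((β + 1) * p - 1)) * F s ^ p) :=
    fun s (hs : 0 < s) => by
    have h_coeff : β ^ (1 - p) * (s ^ β / β) * s ^ ((1 + β) * (p - 1)) =
        β ^ (-p) * s ^ ((β + 1) * p - 1) := by
      rw [show (β + 1) * p - 1 = β + (1 + β) * (p - 1) by ring, Real.rpow_add hs,
        show 1 - p = -p + 1 by ring, Real.rpow_add_one hβ.ne']
      field_simp
    rw [Measure.restrict_restrict measurableSet_Iio, inter_comm, Ioi_inter_Iio,
      lintegral_const_mul _ (by fun_prop), lintegral_Ioo_rpow (by linarith) hs, sub_add_cancel,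
      ← ENNReal.ofReal_mul (by positivity), ← mul_assoc, ← ENNReal.ofReal_mul (by positivity),
      h_coeff, ENNReal.ofReal_mul (by positivity), mul_assoc]
  calc ∫⁻ t in Ioi (0 : ℝ), ENNReal.ofReal (t ^ (β * p - 1)) * tail F t ^ p
      ≤ ∫⁻ t in Ioi (0 : ℝ), a t * ∫⁻ s in Ioi t, b s ∂volume.restrict (Ioi 0) := by
        refine setLIntegral_mono' measurableSet_Ioi fun t (ht : 0 < t) => ?_
        rw [Measure.restrict_restrict measurableSet_Ioi, inter_eq_left.2 (Ioi_subset_Ioi ht.le)]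
        exact ofReal_rpow_mul_tail_rpow_le ht (hF.mono_set (Ioi_subset_Ioi ht.le)) hp hβ
    _ = ∫⁻ s in Ioi (0 : ℝ), (∫⁻ t in Iio s, a t ∂volume.restrict (Ioi 0)) * b s :=
        lintegral_mul_setLIntegral_Ioi (by fun_prop) hb
    _ = _ := by
        rw [setLIntegral_congr_fun measurableSet_Ioi h_inner,
          lintegral_const_mul' _ _ ENNReal.ofReal_ne_top]

lemma ofReal_mul_tail_sq_le (hF : AEMeasurable F (volume.restrict (Ioi 0))) {t : ℝ} (ht : 0 < t) :
    ENNReal.ofReal t * tail F t ^ 2 ≤ radialEnergy F := by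
  have h_tail : tail F t ^ 2 ≤
      ENNReal.ofReal t⁻¹ * ∫⁻ s in Ioi t, ENNReal.ofReal (s ^ 2) * F s ^ 2 := by
    have h := tail_rpow_le ht (hF.mono_set (Ioi_subset_Ioi ht.le)) one_le_two one_pos
    norm_num [Real.rpow_neg_one] at h
    exact h
  calc ENNReal.ofReal t * tail F t ^ 2
      ≤ ENNReal.ofReal t * (ENNReal.ofReal t⁻¹ *
          ∫⁻ s in Ioi t, ENNReal.ofReal (s ^ 2) * F s ^ 2) := by gcongr
    _ = ∫⁻ s in Ioi t, ENNReal.ofReal (s ^ 2) * F s ^ 2 := by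
        rw [← mul_assoc, ← ENNReal.ofReal_mul ht.le, mul_inv_cancel₀ ht.ne', ENNReal.ofReal_one,
          one_mul]
    _ ≤ radialEnergy F := lintegral_mono_set (Ioi_subset_Ioi ht.le)

lemma lintegral_tail_sq_le (hF : AEMeasurable F (volume.restrict (Ioi 0))) :
    ∫⁻ t in Ioi (0 : ℝ), tail F t ^ 2 ≤ 4 * radialEnergy F := by
  have h := lintegral_rpow_mul_tail_rpow_le hF one_le_two (half_pos one_pos)
  norm_num at h
  exact h

lemma lintegral_tail_pow_ten_le (hF : AEMeasurable F (volume.restrict (Ioi 0)))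
    {t : ℝ} (ht : 0 < t) :
    ∫⁻ r in Ioi t, tail F r ^ 10 * ENNReal.ofReal (r ^ 2) ≤
      4 * radialEnergy F ^ 3 * tail F t ^ 4 := by
  have h_pointwise : ∀ r ∈ Ioi t, tail F r ^ 10 * ENNReal.ofReal (r ^ 2) ≤
      radialEnergy F ^ 2 * tail F t ^ 4 * tail F r ^ 2 := fun r (hr : t < r) => by
    have hr0 : 0 < r := ht.trans hr
    calc tail F r ^ 10 * ENNReal.ofReal (r ^ 2)
        = (ENNReal.ofReal r * tail F r ^ 2) ^ 2 * tail F r ^ 4 * tail F r ^ 2 := by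
          rw [ENNReal.ofReal_pow hr0.le]
          ring
      _ ≤ _ := by
          gcongr
          · exact ofReal_mul_tail_sq_le hF hr0
          · exact antitone_tail F hr.le
  calc ∫⁻ r in Ioi t, tail F r ^ 10 * ENNReal.ofReal (r ^ 2)
      ≤ ∫⁻ r in Ioi t, radialEnergy F ^ 2 * tail F t ^ 4 * tail F r ^ 2 :=
        setLIntegral_mono' measurableSet_Ioi h_pointwise
    _ = radialEnergy F ^ 2 * tail F t ^ 4 * ∫⁻ r in Ioi t, tail F r ^ 2 :=
        lintegral_const_mul _ ((antitone_tail F).measurable.pow_const 2)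
    _ ≤ radialEnergy F ^ 2 * tail F t ^ 4 * (4 * radialEnergy F) := by
        gcongr
        exact (lintegral_mono_set (Ioi_subset_Ioi ht.le)).trans (lintegral_tail_sq_le hF)
    _ = 4 * radialEnergy F ^ 3 * tail F t ^ 4 := by ring

theorem eYext_tail_le (hF : AEMeasurable F (volume.restrict (Ioi 0))) :
    eYext (fun r _ => tail F r) 0 ≤ 2 * radialEnergy F ^ (1 / 2 : ℝ) := by
  set d : ℝ≥0∞ := radialEnergy F ^ (1 / 2 : ℝ)
  have hd : radialEnergy F = d ^ 2 := by
    rw [← ENNReal.rpow_two, ← ENNReal.rpow_mul]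
    norm_num
  have h_slice : ∀ᵐ t : ℝ, (∫⁻ r in Ioi (|t| + 0), tail F r ^ 10 * ENNReal.ofReal (r ^ 2))
      ^ (1 / 2 : ℝ) ≤ 2 * d ^ 3 * tail F |t| ^ 2 := by
    filter_upwards [Measure.ae_ne volume (0 : ℝ)] with t ht
    rw [add_zero, one_div, ENNReal.rpow_inv_le_iff two_pos, ENNReal.rpow_two]
    refine (lintegral_tail_pow_ten_le hF (abs_pos.2 ht)).trans_eq ?_
    rw [hd]
    ring
  rw [eYext, one_div (5 : ℝ), ENNReal.rpow_inv_le_iff (by norm_num)]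
  calc _ ≤ ∫⁻ t : ℝ, 2 * d ^ 3 * tail F |t| ^ 2 := lintegral_mono_ae h_slice
    _ = 2 * (2 * d ^ 3 * ∫⁻ t in Ioi (0 : ℝ), tail F t ^ 2) := by
        rw [lintegral_comp_abs fun t => 2 * d ^ 3 * tail F t ^ 2,
          lintegral_const_mul _ ((antitone_tail F).measurable.pow_const 2)]
    _ ≤ 2 * (2 * d ^ 3 * (4 * d ^ 2)) := by
        gcongr
        exact hd ▸ lintegral_tail_sq_le hF
    _ ≤ (2 * d) ^ (5 : ℝ) := by
        rw [ENNReal.rpow_ofNat]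
        ring_nf
        gcongr
        norm_num

end Tail

lemma eYext_mono {u v : ℝ → ℝ → ℝ≥0∞} {a : ℝ} (ha : 0 ≤ a)
    (huv : ∀ r t, 0 < r → u r t ≤ v r t) : eYext u a ≤ eYext v a := by
  refine ENNReal.rpow_le_rpow (lintegral_mono fun t => ENNReal.rpow_le_rpow ?_ (by norm_num))
    (by norm_num)
  refine setLIntegral_mono' measurableSet_Ioi fun r hr => ?_
  gcongr
  exact huv r t ((by positivity : 0 ≤ |t| + a).trans_lt hr)

lemma ofReal_integral_le_lintegral_enorm {α : Type*} [MeasurableSpace α] {μ : Measure α}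
    (g : α → ℝ) : ENNReal.ofReal (∫ x, g x ∂μ) ≤ ∫⁻ x, ‖g x‖ₑ ∂μ :=
  (Real.ofReal_le_enorm _).trans (enorm_integral_le_lintegral_enorm _)

lemma ofReal_Yext_le (u : ℝ → ℝ → ℝ) (a : ℝ) :
    ENNReal.ofReal (Yext u a) ≤ eYext (fun r t => ‖u r t‖ₑ) a := by
  rw [Yext, ← ENNReal.ofReal_rpow_of_nonneg (integral_nonneg fun t => Real.sqrt_nonneg _)
    (by norm_num)]
  refine ENNReal.rpow_le_rpow ((ofReal_integral_le_lintegral_enorm _).trans ?_) (by norm_num)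
  refine lintegral_mono fun t => ?_
  rw [Real.enorm_of_nonneg (Real.sqrt_nonneg _), Real.sqrt_eq_rpow,
    ← ENNReal.ofReal_rpow_of_nonneg (integral_nonneg fun r => by positivity) (by norm_num)]
  refine ENNReal.rpow_le_rpow ((ofReal_integral_le_lintegral_enorm _).trans_eq ?_) (by norm_num)
  simp only [enorm_mul, enorm_pow, Real.enorm_abs, Real.enorm_of_nonneg (sq_nonneg _)]

section Hdot1

variable {E : Type*} [NormedAddCommGroup E] {f f' : ℝ → E}

lemma aestronglyMeasurable_Ioi_of_intervalIntegrable {c : ℝ}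
    (hf' : ∀ a b : ℝ, c < a → a ≤ b → IntervalIntegrable f' volume a b) :
    AEStronglyMeasurable f' (volume.restrict (Ioi c)) := by
  refine LocallyIntegrableOn.aestronglyMeasurable fun x (hx : c < x) => ?_
  refine IntegrableAtFilter.filter_mono nhdsWithin_le_nhds ⟨Ioc ((c + x) / 2) (x + 1), ?_, ?_⟩
  · exact Ioc_mem_nhds (by linarith) (lt_add_one x)
  · exact (hf' _ _ (by linarith) (by linarith)).1

lemma radialEnergy_enorm (h_energy : IntegrableOn (fun r => r ^ 2 * ‖f' r‖ ^ 2) (Ioi 0)) :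
    radialEnergy (fun r => ‖f' r‖ₑ) =
      ENNReal.ofReal (∫ r in Ioi (0 : ℝ), r ^ 2 * ‖f' r‖ ^ 2) := by
  rw [ofReal_integral_eq_lintegral_ofReal h_energy (ae_of_all _ fun r => by positivity)]
  simp only [radialEnergy, ENNReal.ofReal_mul (sq_nonneg _), ENNReal.ofReal_pow (norm_nonneg _),
    ofReal_norm]

variable [NormedSpace ℝ E]

lemma enorm_le_tail (hf : ∀ a b : ℝ, 0 < a → a ≤ b → f b - f a = ∫ r in a..b, f' r)
    (h_lim : Filter.Tendsto f Filter.atTop (nhds 0)) {r : ℝ} (hr : 0 < r) :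
    ‖f r‖ₑ ≤ tail (fun s => ‖f' s‖ₑ) r := by
  have h : Filter.Tendsto (fun b => ‖f b - f r‖ₑ) Filter.atTop (nhds ‖0 - f r‖ₑ) :=
    (h_lim.sub_const _).enorm
  rw [zero_sub, enorm_neg] at h
  refine le_of_tendsto h ?_
  filter_upwards [Filter.eventually_ge_atTop r] with b hb
  rw [hf r b hr hb, intervalIntegral.integral_of_le hb]
  exact (enorm_integral_le_lintegral_enorm _).trans (lintegral_mono_set Ioc_subset_Ioi_self)

theorem Y_by_Hdot1_general [CompleteSpace E]
    (hf' : ∀ a b : ℝ, 0 < a → a ≤ b → IntervalIntegrable f' volume a b)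
    (hf : ∀ a b : ℝ, 0 < a → a ≤ b → f b - f a = ∫ r in a..b, f' r)
    (h_lim : Filter.Tendsto f Filter.atTop (nhds 0))
    (h_energy : IntegrableOn (fun r => r ^ 2 * ‖f' r‖ ^ 2) (Ioi 0)) :
    Yext (fun r _ => ‖f r‖) 0 ≤ 2 * Real.sqrt (∫ r in Ioi (0 : ℝ), r ^ 2 * ‖f' r‖ ^ 2) := by
  rw [← ENNReal.ofReal_le_ofReal_iff (by positivity)]
  calc ENNReal.ofReal (Yext (fun r _ => ‖f r‖) 0)
      ≤ eYext (fun r _ => ‖f r‖ₑ) 0 := by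
        simpa only [enorm_norm] using ofReal_Yext_le (fun r _ => ‖f r‖) 0
    _ ≤ eYext (fun r _ => tail (fun s => ‖f' s‖ₑ) r) 0 :=
        eYext_mono le_rfl fun _ _ hr => enorm_le_tail hf h_lim hr
    _ ≤ 2 * radialEnergy (fun s => ‖f' s‖ₑ) ^ (1 / 2 : ℝ) :=
        eYext_tail_le (aestronglyMeasurable_Ioi_of_intervalIntegrable hf').enorm
    _ = ENNReal.ofReal (2 * Real.sqrt (∫ r in Ioi (0 : ℝ), r ^ 2 * ‖f' r‖ ^ 2)) := by
        rw [radialEnergy_enorm h_energy, ENNReal.ofReal_mul zero_le_two, ENNReal.ofReal_ofNat,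
          Real.sqrt_eq_rpow, ENNReal.ofReal_rpow_of_nonneg
            (integral_nonneg fun r => by positivity) (by norm_num)]

end Hdot1

/-- **Exterior `Y` norm of a static radial `Ḣ¹` function.** If `f` is locally absolutely
continuous on `(0,∞)` (encoded by the fundamental theorem of calculus with a locally
integrable derivative `f'`), `f(r) → 0` as `r → ∞` and `D = (∫_0^∞ r² f'(r)² dr)^{1/2} < ∞`,
then, viewing `f` as a time-independent function, `‖f‖_{Y(0,∞)} ≤ C·D`. -/
theorem Y_by_Hdot1 :
    ∃ C > 0, ∀ f f' : ℝ → ℝ,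
      (∀ a b : ℝ, 0 < a → a ≤ b → IntervalIntegrable f' volume a b) →
      (∀ a b : ℝ, 0 < a → a ≤ b → f b - f a = ∫ r in a..b, f' r) →
      Filter.Tendsto f Filter.atTop (nhds 0) →
      IntegrableOn (fun r => r ^ 2 * (f' r) ^ 2) (Ioi 0) →
      Yext (fun r _ => f r) 0
        ≤ C * Real.sqrt (∫ r in Ioi (0 : ℝ), r ^ 2 * (f' r) ^ 2) := by
  refine ⟨2, two_pos, fun f f' hf' hf h_lim h_energy => ?_⟩
  simpa [Yext] using Y_by_Hdot1_general hf' hf h_lim (by simpa using h_energy)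
end

section
/- Let γ > 0 and let F : (0,∞) × ℝ → ℝ be continuous and satisfy u·F(r,u) ≤ 0 (defocusing) and |F(r,u)| ≤ γ|u|⁵ for all r > 0 and u ∈ ℝ. Let α > 0, R₀ ≥ 0, and let w : (R₀,∞) → ℝ be twice continuously differentiable with w″(r) = −r·F(r, w(r)/r) for all r > R₀, lim_{r→∞} w(r) = α, and lim_{r→∞} w′(r) = 0. Then w(r) ≥ α and w′(r) ≤ 0 for every r > R₀. -/
open Set

/-!
The defocusing sign makes `w * w''` nonnegative, so `w ^ 2` is convex: its second derivative is
`2 * (w' ^ 2 + w * w'')`. A convex function that stays bounded at infinity cannot increase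
anywhere, so `|w|` decreases to its limit `α > 0`. Hence `w` has no zero, is positive by
connectedness, and itself decreases to `α`.
-/

open Filter Topology
open scoped RealInnerProductSpace

theorem antitoneOn_of_convexOn_of_isBoundedUnder {s : Set ℝ} {f : ℝ → ℝ} (hf : ConvexOn ℝ s f)
    (hs : s ∈ atTop) (hbdd : IsBoundedUnder (· ≤ ·) atTop f) : AntitoneOn f s := by
  intro x hx y _ hxy
  by_contra! hlt
  have hxy' : x < y := hxy.lt_of_ne fun h => hlt.ne (congrArg f h)
  have hslope : 0 < (f y - f x) / (y - x) := div_pos (sub_pos.2 hlt) (sub_pos.2 hxy')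
  have hsecant : ∀ᶠ z in atTop, f y + (f y - f x) / (y - x) * (z - y) ≤ f z := by
    filter_upwards [hs, eventually_gt_atTop y] with z hz hyz
    have h := hf.slope_mono_adjacent hx hz hxy' hyz
    rw [le_div_iff₀ (sub_pos.2 hyz)] at h
    linarith
  have hline : Tendsto (fun z => f y + (f y - f x) / (y - x) * (z - y)) atTop atTop :=
    tendsto_atTop_add_const_left _ _
      ((tendsto_atTop_add_const_right _ (-y) tendsto_id).const_mul_atTop hslope)
  exact not_isBoundedUnder_of_tendsto_atTop (tendsto_atTop_mono' _ hsecant hline) hbdd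

theorem le_of_antitoneOn_of_tendsto_atTop {ι β : Type*} [Preorder ι] [IsDirectedOrder ι]
    [TopologicalSpace β] [Preorder β] [ClosedIicTopology β] {s : Set ι} {f : ι → β} {c : β} {i : ι}
    (hf : AntitoneOn f s) (hs : s ∈ atTop) (hlim : Tendsto f atTop (𝓝 c)) (hi : i ∈ s) :
    c ≤ f i := by
  have : Nonempty ι := ⟨i⟩
  refine le_of_tendsto hlim ?_
  filter_upwards [hs, eventually_ge_atTop i] with j hj hij using hf hi hj hij

section InnerProductSpace

variable {E : Type*} [NormedAddCommGroup E] [InnerProductSpace ℝ E] {D : Set ℝ} {w w' w'' : ℝ → E}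

theorem convexOn_norm_sq_of_inner_nonneg (hD : Convex ℝ D) (hc : ContinuousOn w D)
    (hw : ∀ r ∈ interior D, HasDerivAt w (w' r) r)
    (hw' : ∀ r ∈ interior D, HasDerivAt w' (w'' r) r)
    (hinner : ∀ r ∈ interior D, 0 ≤ ⟪w r, w'' r⟫) : ConvexOn ℝ D (fun r => ‖w r‖ ^ 2) := by
  refine convexOn_of_hasDerivWithinAt2_nonneg hD (hc.norm.pow 2)
    (fun r hr => (hw r hr).norm_sq.hasDerivWithinAt)
    (fun r hr => (((hw r hr).inner ℝ (hw' r hr)).const_mul 2).hasDerivWithinAt) fun r hr => ?_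
  have hw'_sq : 0 ≤ ⟪w' r, w' r⟫ := real_inner_self_nonneg
  linarith [hinner r hr]

theorem antitoneOn_norm_of_inner_nonneg (hD : Convex ℝ D) (hDtop : D ∈ atTop)
    (hc : ContinuousOn w D)
    (hw : ∀ r ∈ interior D, HasDerivAt w (w' r) r)
    (hw' : ∀ r ∈ interior D, HasDerivAt w' (w'' r) r)
    (hinner : ∀ r ∈ interior D, 0 ≤ ⟪w r, w'' r⟫)
    (hbdd : IsBoundedUnder (· ≤ ·) atTop fun r => ‖w r‖) : AntitoneOn (fun r => ‖w r‖) D := by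
  have hbdd_sq : IsBoundedUnder (· ≤ ·) atTop fun r => ‖w r‖ ^ 2 := by
    obtain ⟨C, hC⟩ := hbdd.eventually_le
    exact isBoundedUnder_of_eventually_le
      (hC.mono fun r hr => pow_le_pow_left₀ (norm_nonneg (w r)) hr 2)
  have hsq : AntitoneOn (fun r => ‖w r‖ ^ 2) D :=
    antitoneOn_of_convexOn_of_isBoundedUnder
      (convexOn_norm_sq_of_inner_nonneg hD hc hw hw' hinner) hDtop hbdd_sq
  exact fun r hr s hs hrs => le_of_sq_le_sq (hsq hr hs hrs) (norm_nonneg _)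

end InnerProductSpace

theorem antitoneOn_of_mul_nonneg_of_tendsto_pos {D : Set ℝ} {w w' w'' : ℝ → ℝ} {α : ℝ}
    (hD : Convex ℝ D) (hDtop : D ∈ atTop) (hc : ContinuousOn w D)
    (hw : ∀ r ∈ interior D, HasDerivAt w (w' r) r)
    (hw' : ∀ r ∈ interior D, HasDerivAt w' (w'' r) r)
    (hmul : ∀ r ∈ interior D, 0 ≤ w r * w'' r)
    (hα : 0 < α) (hlim : Tendsto w atTop (𝓝 α)) : AntitoneOn w D := by
  have habs : AntitoneOn (fun r => ‖w r‖) D :=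
    antitoneOn_norm_of_inner_nonneg hD hDtop hc hw hw'
      (fun r hr => (hmul r hr).trans_eq (mul_comm _ _)) hlim.norm.isBoundedUnder_le
  have hne : ∀ r ∈ D, w r ≠ 0 := by
    intro r hr
    have hle : ‖α‖ ≤ ‖w r‖ :=
      le_of_antitoneOn_of_tendsto_atTop (f := fun r => ‖w r‖) habs hDtop hlim.norm hr
    exact norm_pos_iff.1 ((norm_pos_iff.2 hα.ne').trans_le hle)
  have hpos_somewhere : ∃ s ∈ D, 0 < w s :=
    nonempty_of_mem (inter_mem hDtop (hlim.eventually_const_lt hα))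
  have hpos : ∀ r ∈ D, 0 < w r := fun r hr =>
    hD.isPreconnected.lt_of_ne hc hne hpos_somewhere hr
  exact habs.congr fun r hr => Real.norm_of_nonneg (hpos r hr).le

theorem mul_neg_mul_nonneg_of_div_mul_nonpos {x r a : ℝ} (hr : r ≠ 0) (h : x / r * a ≤ 0) :
    0 ≤ x * -(r * a) := by
  have hscale : x * -(r * a) = r ^ 2 * -(x / r * a) := by
    field_simp
  rw [hscale]
  exact mul_nonneg (sq_nonneg r) (neg_nonneg.2 h)

theorem defocusing_monotone_general {F : ℝ → ℝ → ℝ}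
    (hdef : ∀ r : ℝ, 0 < r → ∀ u : ℝ, u * F r u ≤ 0)
    {α R₀ : ℝ} (hα : 0 < α) (hR₀ : 0 ≤ R₀) {w w' : ℝ → ℝ}
    (hw : ∀ r ∈ Ioi R₀, HasDerivAt w (w' r) r)
    (hw' : ∀ r ∈ Ioi R₀, HasDerivAt w' (-(r * F r (w r / r))) r)
    (hlim : Tendsto w atTop (𝓝 α)) :
    ∀ r ∈ Ioi R₀, α ≤ w r ∧ w' r ≤ 0 := by
  have hmul : ∀ r ∈ Ioi R₀, 0 ≤ w r * -(r * F r (w r / r)) := by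
    intro r hr
    have hr_pos : 0 < r := hR₀.trans_lt hr
    exact mul_neg_mul_nonneg_of_div_mul_nonpos hr_pos.ne' (hdef r hr_pos (w r / r))
  have hanti : AntitoneOn w (Ioi R₀) :=
    antitoneOn_of_mul_nonneg_of_tendsto_pos (convex_Ioi R₀) (Ioi_mem_atTop R₀)
      (HasDerivAt.continuousOn hw) (by rwa [interior_Ioi]) (by rwa [interior_Ioi])
      (by rwa [interior_Ioi]) hα hlim
  refine fun r hr => ⟨le_of_antitoneOn_of_tendsto_atTop hanti (Ioi_mem_atTop R₀) hlim hr, ?_⟩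
  rw [← (hw r hr).hasDerivWithinAt.derivWithin (isOpen_Ioi.uniqueDiffWithinAt hr)]
  exact hanti.derivWithin_nonpos

/-- **Monotonicity of non-radiative profiles for defocusing equations.** Let `F` be continuous
on `(0,∞) × ℝ`, defocusing (`u·F(r,u) ≤ 0`) and energy critical (`|F(r,u)| ≤ γ|u|⁵`). If
`w : (R₀,∞) → ℝ` is a C² solution of `w'' = -r·F(r, w/r)` with `w → α > 0` and `w' → 0` at
infinity, then `w(r) ≥ α` and `w'(r) ≤ 0` for all `r > R₀`. -/
theorem defocusing_monotone (γ : ℝ) (hγ : 0 < γ) (F : ℝ → ℝ → ℝ)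
    (hFc : ContinuousOn (Function.uncurry F) (Ioi (0 : ℝ) ×ˢ (univ : Set ℝ)))
    (hdef : ∀ r : ℝ, 0 < r → ∀ u : ℝ, u * F r u ≤ 0)
    (hbound : ∀ r : ℝ, 0 < r → ∀ u : ℝ, |F r u| ≤ γ * |u| ^ 5)
    (α R₀ : ℝ) (hα : 0 < α) (hR₀ : 0 ≤ R₀)
    (w w' : ℝ → ℝ)
    (hw : ∀ r ∈ Ioi R₀, HasDerivAt w (w' r) r)
    (hw' : ∀ r ∈ Ioi R₀, HasDerivAt w' (-(r * F r (w r / r))) r)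
    (hlim : Filter.Tendsto w Filter.atTop (nhds α))
    (hlim' : Filter.Tendsto w' Filter.atTop (nhds 0)) :
    ∀ r ∈ Ioi R₀, α ≤ w r ∧ w' r ≤ 0 :=
  defocusing_monotone_general hdef hα hR₀ hw hw' hlim
end

section
/- There is an absolute constant C > 0 with the following property. Let γ > 0 and let F : (0,∞) × ℝ → ℝ be continuous and satisfy |F(r,u)| ≤ γ|u|⁵ and |F(r,u) − F(r,v)| ≤ γ|u−v|(|u|⁴+|v|⁴) for all r > 0 and u, v ∈ ℝ. Then for every α ≠ 0 and every R ≥ C γ^{1/2} α², there exists a unique continuous function w : [R,∞) → ℝ with sup_{r≥R} |w(r)| ≤ 2|α| satisfying the integral equation w(r) = α − ∫_r^∞ ∫_s^∞ τ·F(τ, w(τ)/τ) dτ ds for all r ≥ R. Moreover this w is twice differentiable, satisfies w″(r) = −r·F(r, w(r)/r) on (R,∞), and lim_{r→∞} w(r) = α, lim_{r→∞} w′(r) = 0. -/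
open Set MeasureTheory

/-!
Solutions are the fixed points of `w ↦ α - ∫_r^∞ ∫_s^∞ f(τ, w(τ)) dτ ds`, where
`f(τ, x) = τ F(τ, x/τ)`. On the ball of radius `B = 2|α|` of bounded continuous functions on
`[R, ∞)`, criticality makes `f(τ, ·)` Lipschitz with constant `ℓ(τ)` of order `γ B⁴ τ⁻⁴`. The double
tail integral of `ℓ` is of order `γ α⁴ R⁻²`, so for `R` large compared with `γ^{1/2} α²` it is
at most `1/2`. As `f(τ, 0) = 0`, this makes the map a contraction and keeps the ball invariant.
-/

section TailIntegral

open Filter Topology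

variable {E : Type*} [NormedAddCommGroup E] [NormedSpace ℝ E] {h k : ℝ → E} {m : ℝ → ℝ} {R r : ℝ}

/-- The tail integral `r ↦ ∫_r^∞ h` of a function on a half-line: the primitive of `-h` that
vanishes at infinity. It is `0` where `h` is not integrable. -/
noncomputable def tailIntegral (h : ℝ → E) (r : ℝ) : E := ∫ t in Ioi r, h t

/-- Integrability of `h` and of its tail integral on `(R, ∞)`, so that the double integral
`∫_r^∞ ∫_s^∞ h` makes sense for `r ≥ R`. -/
structure TwiceTailIntegrable (h : ℝ → E) (R : ℝ) : Prop where
  integrableOn : IntegrableOn h (Ioi R)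
  integrableOn_tailIntegral : IntegrableOn (tailIntegral h) (Ioi R)

lemma hasDerivAt_tailIntegral [CompleteSpace E] (hi : IntegrableOn h (Ioi R)) (hr : r ∈ Ioi R)
    (hc : ContinuousAt h r) : HasDerivAt (tailIntegral h) (-h r) r := by
  have hprimitive : HasDerivAt (fun s => ∫ t in R..s, h t) (h r) r := by
    refine intervalIntegral.integral_hasDerivAt_right ?_
      ⟨Ioi R, Ioi_mem_nhds hr, hi.aestronglyMeasurable⟩ hc
    exact (intervalIntegrable_iff_integrableOn_Ioc_of_le (mem_Ioi.1 hr).le).2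
      (hi.mono_set Ioc_subset_Ioi_self)
  refine (hprimitive.const_sub (tailIntegral h R)).congr_of_eventuallyEq ?_
  filter_upwards [Ioi_mem_nhds hr] with s hs
  rw [← intervalIntegral.integral_Ioi_sub_Ioi hi (mem_Ioi.1 hs).le]
  exact (sub_sub_cancel _ _).symm

lemma tendsto_tailIntegral_atTop (h : ℝ → E) : Tendsto (tailIntegral h) atTop (𝓝 0) :=
  tendsto_integral_Ioi_zero tendsto_id

lemma tailIntegral_sub (hh : IntegrableOn h (Ioi R)) (hk : IntegrableOn k (Ioi R)) (hr : R ≤ r) :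
    tailIntegral (fun t => h t - k t) r = tailIntegral h r - tailIntegral k r :=
  integral_sub (hh.mono_set (Ioi_subset_Ioi hr)) (hk.mono_set (Ioi_subset_Ioi hr))

lemma tailIntegral_mul_const (m : ℝ → ℝ) (c : ℝ) :
    tailIntegral (fun t => m t * c) = fun r => tailIntegral m r * c :=
  funext fun _ => integral_mul_const c m

namespace TwiceTailIntegrable

lemma mul_const (hm : TwiceTailIntegrable m R) (c : ℝ) :
    TwiceTailIntegrable (fun t => m t * c) R where
  integrableOn := hm.integrableOn.mul_const c
  integrableOn_tailIntegral := by
    rw [tailIntegral_mul_const]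
    exact hm.integrableOn_tailIntegral.mul_const c

lemma norm_tailIntegral_le (hm : TwiceTailIntegrable m R) (hle : ∀ t ∈ Ioi R, ‖h t‖ ≤ m t)
    (hr : R ≤ r) : ‖tailIntegral h r‖ ≤ tailIntegral m r :=
  norm_integral_le_of_norm_le (hm.integrableOn.mono_set (Ioi_subset_Ioi hr)) <|
    ae_restrict_of_forall_mem measurableSet_Ioi fun t ht => hle t (hr.trans_lt ht)

lemma norm_tailIntegral_tailIntegral_le (hm : TwiceTailIntegrable m R)
    (hle : ∀ t ∈ Ioi R, ‖h t‖ ≤ m t) (hr : R ≤ r) :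
    ‖tailIntegral (tailIntegral h) r‖ ≤ tailIntegral (tailIntegral m) R := by
  have hle_tail : ∀ s ∈ Ioi R, ‖tailIntegral h s‖ ≤ tailIntegral m s := fun s hs =>
    hm.norm_tailIntegral_le hle (mem_Ioi.1 hs).le
  calc ‖tailIntegral (tailIntegral h) r‖
      ≤ tailIntegral (tailIntegral m) r :=
        norm_integral_le_of_norm_le (hm.integrableOn_tailIntegral.mono_set (Ioi_subset_Ioi hr)) <|
          ae_restrict_of_forall_mem measurableSet_Ioi fun s hs => hle_tail s (hr.trans_lt hs)
    _ ≤ tailIntegral (tailIntegral m) R :=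
        setIntegral_mono_set hm.integrableOn_tailIntegral
          (ae_restrict_of_forall_mem measurableSet_Ioi
            fun s hs => (norm_nonneg _).trans (hle_tail s hs))
          (Ioi_subset_Ioi hr).eventuallyLE

lemma of_norm_le (hm : TwiceTailIntegrable m R)
    (hmeas : AEStronglyMeasurable h (volume.restrict (Ioi R)))
    (hle : ∀ t ∈ Ioi R, ‖h t‖ ≤ m t) : TwiceTailIntegrable h R := by
  have hh : IntegrableOn h (Ioi R) :=
    hm.integrableOn.mono' hmeas (ae_restrict_of_forall_mem measurableSet_Ioi hle)
  have htail : ContinuousOn (tailIntegral h) (Ioi R) :=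
    hh.continuousOn_Ici_primitive_Ioi.mono Ioi_subset_Ici_self
  exact ⟨hh, hm.integrableOn_tailIntegral.mono' (htail.aestronglyMeasurable measurableSet_Ioi) <|
    ae_restrict_of_forall_mem measurableSet_Ioi fun _ hs =>
      hm.norm_tailIntegral_le hle (mem_Ioi.1 hs).le⟩

lemma tailIntegral_tailIntegral_sub (hh : TwiceTailIntegrable h R) (hk : TwiceTailIntegrable k R)
    (hr : R ≤ r) :
    tailIntegral (tailIntegral fun t => h t - k t) r =
      tailIntegral (tailIntegral h) r - tailIntegral (tailIntegral k) r := by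
  rw [← tailIntegral_sub hh.integrableOn_tailIntegral hk.integrableOn_tailIntegral hr]
  exact setIntegral_congr_fun measurableSet_Ioi fun s hs =>
    tailIntegral_sub hh.integrableOn hk.integrableOn (hr.trans (mem_Ioi.1 hs).le)

lemma continuousOn_tailIntegral_tailIntegral (hh : TwiceTailIntegrable h R) :
    ContinuousOn (tailIntegral (tailIntegral h)) (Ici R) :=
  hh.integrableOn_tailIntegral.continuousOn_Ici_primitive_Ioi

lemma hasDerivAt_tailIntegral_tailIntegral [CompleteSpace E] (hh : TwiceTailIntegrable h R)
    (hr : r ∈ Ioi R) :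
    HasDerivAt (tailIntegral (tailIntegral h)) (-tailIntegral h r) r :=
  hasDerivAt_tailIntegral hh.integrableOn_tailIntegral hr <|
    hh.integrableOn.continuousOn_Ici_primitive_Ioi.continuousAt (Ici_mem_nhds hr)

end TwiceTailIntegrable

section Rpow

variable {a : ℝ}

lemma tailIntegral_rpow (ha : a < -1) (hr : 0 < r) :
    tailIntegral (fun t => t ^ a) r = r ^ (a + 1) * (-(a + 1)⁻¹) := by
  rw [tailIntegral, integral_Ioi_rpow_of_lt ha hr, neg_div, div_eq_mul_inv, mul_neg]

lemma twiceTailIntegrable_rpow (ha : a < -2) (hR : 0 < R) :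
    TwiceTailIntegrable (fun t => t ^ a) R where
  integrableOn := integrableOn_Ioi_rpow_of_lt (by linarith) hR
  integrableOn_tailIntegral :=
    IntegrableOn.congr_fun ((integrableOn_Ioi_rpow_of_lt (by linarith) hR).mul_const _)
      (fun _ hs => (tailIntegral_rpow (by linarith) (hR.trans hs)).symm) measurableSet_Ioi

lemma tailIntegral_tailIntegral_rpow (ha : a < -2) (hR : 0 < R) :
    tailIntegral (tailIntegral fun t => t ^ a) R = R ^ (a + 2) / ((a + 1) * (a + 2)) := by
  calc tailIntegral (tailIntegral fun t => t ^ a) R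
      = tailIntegral (fun s => s ^ (a + 1) * (-(a + 1)⁻¹)) R :=
        setIntegral_congr_fun measurableSet_Ioi fun s hs =>
          tailIntegral_rpow (by linarith) (hR.trans hs)
    _ = R ^ (a + 2) / ((a + 1) * (a + 2)) := by
        simp only [tailIntegral_mul_const]
        rw [tailIntegral_rpow (by linarith) hR, show a + 1 + 1 = a + 2 by ring]
        field_simp

end Rpow

end TailIntegral

section FixedPoint

open Metric
open scoped BoundedContinuousFunction

variable {X E : Type*} [TopologicalSpace X] [NormedAddCommGroup E] {s : Set X} {B K : ℝ}

/-- The functions that are continuous on `s` and bounded by `B` there: the closed ball of radius `B`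
in `s →ᵇ E`, in terms of functions on all of `X`, whose values outside `s` are irrelevant. -/
def continuousOnBall (E : Type*) [NormedAddCommGroup E] (s : Set X) (B : ℝ) : Set (X → E) :=
  {w | ContinuousOn w s ∧ ∀ x ∈ s, ‖w x‖ ≤ B}

/-- The restriction to `s` of an element of `continuousOnBall E s B`, as a point of the closed ball
of the Banach space `s →ᵇ E`. -/
noncomputable def restrictToBall (hB : 0 ≤ B) (w : X → E) (hw : w ∈ continuousOnBall E s B) :
    closedBall (0 : s →ᵇ E) B :=
  ⟨.ofNormedAddCommGroup (s.domRestrict w) hw.1.domRestrict B fun x => hw.2 x x.2,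
    mem_closedBall_zero_iff.2 <| BoundedContinuousFunction.norm_ofNormedAddCommGroup_le _ hB _⟩

/-- The extension by zero to `X` of a bounded continuous function on `s`. -/
noncomputable def extendByZero (u : s →ᵇ E) : X → E := Function.extend Subtype.val u 0

lemma extendByZero_apply (u : s →ᵇ E) (x : s) : extendByZero u x = u x :=
  Subtype.val_injective.extend_apply u 0 x

lemma extendByZero_mem_continuousOnBall (u : closedBall (0 : s →ᵇ E) B) :
    extendByZero u.1 ∈ continuousOnBall E s B := by
  refine ⟨continuousOn_iff_continuous_domRestrict.2 ?_, fun x hx => ?_⟩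
  · exact u.1.continuous.congr fun x => (extendByZero_apply u.1 x).symm
  · rw [extendByZero_apply u.1 ⟨x, hx⟩]
    exact (u.1.norm_coe_le_norm _).trans (mem_closedBall_zero_iff.1 u.2)

theorem exists_unique_eqOn_of_contracting [CompleteSpace E] {Φ : (X → E) → X → E} (hB : 0 ≤ B)
    (hK : 0 ≤ K) (hK1 : K < 1) (hmaps : MapsTo Φ (continuousOnBall E s B) (continuousOnBall E s B))
    (hcontr : ∀ w ∈ continuousOnBall E s B, ∀ v ∈ continuousOnBall E s B, ∀ δ : ℝ,
      (∀ x ∈ s, dist (w x) (v x) ≤ δ) → ∀ x ∈ s, dist (Φ w x) (Φ v x) ≤ K * δ) :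
    ∃ w ∈ continuousOnBall E s B, EqOn w (Φ w) s ∧
      ∀ v ∈ continuousOnBall E s B, EqOn v (Φ v) s → EqOn v w s := by
  let Ψ : closedBall (0 : s →ᵇ E) B → closedBall (0 : s →ᵇ E) B := fun u =>
    restrictToBall hB (Φ (extendByZero u.1)) (hmaps (extendByZero_mem_continuousOnBall u))
  have hΨ : ContractingWith ⟨K, hK⟩ Ψ := by
    refine ⟨hK1, LipschitzWith.of_dist_le_mul fun u v => ?_⟩
    refine (BoundedContinuousFunction.dist_le (mul_nonneg hK dist_nonneg)).2 fun x => ?_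
    refine hcontr _ (extendByZero_mem_continuousOnBall u) _ (extendByZero_mem_continuousOnBall v)
      (dist u v) (fun y hy => ?_) x x.2
    rw [extendByZero_apply u.1 ⟨y, hy⟩, extendByZero_apply v.1 ⟨y, hy⟩]
    exact BoundedContinuousFunction.dist_coe_le_dist _
  have : Nonempty (closedBall (0 : s →ᵇ E) B) := ⟨⟨0, mem_closedBall_self hB⟩⟩
  have : CompleteSpace (closedBall (0 : s →ᵇ E) B) := isClosed_closedBall.completeSpace_coe
  obtain ⟨u, hu⟩ : ∃ u, Function.IsFixedPt Ψ u := ⟨_, hΨ.fixedPoint_isFixedPt⟩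
  refine ⟨extendByZero u.1, extendByZero_mem_continuousOnBall u, fun x hx => ?_,
    fun v hv hvΦ x hx => ?_⟩
  · calc extendByZero u.1 x = u.1 ⟨x, hx⟩ := extendByZero_apply u.1 ⟨x, hx⟩
      _ = (Ψ u).1 ⟨x, hx⟩ := by rw [hu.eq]
  · have hfixed : Function.IsFixedPt Ψ (restrictToBall hB v hv) := by
      refine Subtype.ext (BoundedContinuousFunction.ext fun y => ?_)
      -- `Φ v` on `s` depends only on `v` on `s`: the contraction estimate with `δ = 0`.
      have hlocal := hcontr _ (extendByZero_mem_continuousOnBall (restrictToBall hB v hv)) v hv 0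
        (fun z hz => (dist_eq_zero.2 (extendByZero_apply _ ⟨z, hz⟩)).le) y y.2
      rw [mul_zero, dist_le_zero] at hlocal
      exact hlocal.trans (hvΦ y.2).symm
    calc v x = (restrictToBall hB v hv).1 ⟨x, hx⟩ := rfl
      _ = u.1 ⟨x, hx⟩ := by rw [hΨ.fixedPoint_unique' hfixed hu]
      _ = extendByZero u.1 x := (extendByZero_apply u.1 ⟨x, hx⟩).symm

end FixedPoint

section AsymptoticProblem

open Filter Topology Metric

variable {E : Type*} [NormedAddCommGroup E] {f : ℝ → E → E} {ℓ : ℝ → ℝ}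
  {R B δ : ℝ} {α : E} {w v : ℝ → E}

/-- A continuous right-hand side on `(R, ∞)`, vanishing at `0` and Lipschitz on the ball of radius
`B`, whose Lipschitz constant `ℓ t` has a convergent double tail integral. -/
structure IsTailLipschitz (f : ℝ → E → E) (ℓ : ℝ → ℝ) (R B : ℝ) : Prop where
  continuousOn : ContinuousOn (Function.uncurry f) (Ioi R ×ˢ closedBall 0 B)
  map_zero : ∀ t ∈ Ioi R, f t 0 = 0
  norm_map_sub_le : ∀ t ∈ Ioi R, ∀ x y : E, ‖x‖ ≤ B → ‖y‖ ≤ B →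
    ‖f t x - f t y‖ ≤ ℓ t * ‖x - y‖
  weight_nonneg : ∀ t ∈ Ioi R, 0 ≤ ℓ t
  twiceTailIntegrable : TwiceTailIntegrable ℓ R

namespace IsTailLipschitz

lemma tailIntegral_tailIntegral_nonneg (hf : IsTailLipschitz f ℓ R B) :
    0 ≤ tailIntegral (tailIntegral ℓ) R :=
  (norm_nonneg _).trans <| hf.twiceTailIntegrable.norm_tailIntegral_tailIntegral_le
    (fun t ht => (Real.norm_of_nonneg (hf.weight_nonneg t ht)).le) le_rfl

lemma norm_comp_le (hf : IsTailLipschitz f ℓ R B) (hw : w ∈ continuousOnBall E (Ici R) B) :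
    ∀ t ∈ Ioi R, ‖f t (w t)‖ ≤ ℓ t * B := by
  intro t ht
  have hwt : ‖w t‖ ≤ B := hw.2 t (Ioi_subset_Ici_self ht)
  have h0 : ‖(0 : E)‖ ≤ B := norm_zero.trans_le ((norm_nonneg _).trans hwt)
  calc ‖f t (w t)‖ = ‖f t (w t) - f t 0‖ := by rw [hf.map_zero t ht, sub_zero]
    _ ≤ ℓ t * ‖w t - 0‖ := hf.norm_map_sub_le t ht _ _ hwt h0
    _ ≤ ℓ t * B := by
      rw [sub_zero]
      exact mul_le_mul_of_nonneg_left hwt (hf.weight_nonneg t ht)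

lemma continuousOn_comp (hf : IsTailLipschitz f ℓ R B) (hw : w ∈ continuousOnBall E (Ici R) B) :
    ContinuousOn (fun t => f t (w t)) (Ioi R) :=
  hf.continuousOn.comp (continuousOn_id.prodMk (hw.1.mono Ioi_subset_Ici_self)) fun t ht =>
    ⟨ht, mem_closedBall_zero_iff.2 (hw.2 t (Ioi_subset_Ici_self ht))⟩

variable [NormedSpace ℝ E]

lemma twiceTailIntegrable_comp (hf : IsTailLipschitz f ℓ R B)
    (hw : w ∈ continuousOnBall E (Ici R) B) : TwiceTailIntegrable (fun t => f t (w t)) R :=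
  (hf.twiceTailIntegrable.mul_const B).of_norm_le
    ((hf.continuousOn_comp hw).aestronglyMeasurable measurableSet_Ioi) (hf.norm_comp_le hw)

end IsTailLipschitz

variable [NormedSpace ℝ E]

/-- The integral operator of the problem `w'' = -f(r, w)`, `w → α` and `w' → 0` at infinity. -/
noncomputable def asymptoticOperator (f : ℝ → E → E) (α : E) (w : ℝ → E) (r : ℝ) : E :=
  α - tailIntegral (tailIntegral fun t => f t (w t)) r

lemma tendsto_of_eqOn_asymptoticOperator (hfix : EqOn w (asymptoticOperator f α w) (Ici R)) :
    Tendsto w atTop (𝓝 α) := by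
  have hlim := (tendsto_tailIntegral_atTop (tailIntegral fun t => f t (w t))).const_sub α
  rw [sub_zero] at hlim
  exact hlim.congr' (hfix.eventuallyEq_of_mem (Ici_mem_atTop R)).symm

namespace IsTailLipschitz

lemma mapsTo_asymptoticOperator (hf : IsTailLipschitz f ℓ R B)
    (hα : ‖α‖ ≤ (1 - tailIntegral (tailIntegral ℓ) R) * B) :
    MapsTo (asymptoticOperator f α) (continuousOnBall E (Ici R) B)
      (continuousOnBall E (Ici R) B) := by
  intro w hw
  refine ⟨continuousOn_const.sub
    (hf.twiceTailIntegrable_comp hw).continuousOn_tailIntegral_tailIntegral, fun r hr => ?_⟩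
  have htail := (hf.twiceTailIntegrable.mul_const B).norm_tailIntegral_tailIntegral_le
    (hf.norm_comp_le hw) hr
  simp only [tailIntegral_mul_const] at htail
  calc ‖asymptoticOperator f α w r‖
      ≤ ‖α‖ + ‖tailIntegral (tailIntegral fun t => f t (w t)) r‖ := norm_sub_le _ _
    _ ≤ (1 - tailIntegral (tailIntegral ℓ) R) * B + tailIntegral (tailIntegral ℓ) R * B :=
      add_le_add hα htail
    _ = B := by ring

lemma dist_asymptoticOperator_le (hf : IsTailLipschitz f ℓ R B) (α : E)
    (hw : w ∈ continuousOnBall E (Ici R) B) (hv : v ∈ continuousOnBall E (Ici R) B)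
    (hwv : ∀ r ∈ Ici R, dist (w r) (v r) ≤ δ) :
    ∀ r ∈ Ici R, dist (asymptoticOperator f α w r) (asymptoticOperator f α v r) ≤
      tailIntegral (tailIntegral ℓ) R * δ := by
  intro r hr
  have hpointwise : ∀ t ∈ Ioi R, ‖f t (w t) - f t (v t)‖ ≤ ℓ t * δ := fun t ht =>
    calc ‖f t (w t) - f t (v t)‖
        ≤ ℓ t * ‖w t - v t‖ :=
          hf.norm_map_sub_le t ht _ _ (hw.2 t (Ioi_subset_Ici_self ht))
            (hv.2 t (Ioi_subset_Ici_self ht))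
      _ ≤ ℓ t * δ := by
          rw [← dist_eq_norm]
          exact mul_le_mul_of_nonneg_left (hwv t (Ioi_subset_Ici_self ht)) (hf.weight_nonneg t ht)
  have htail := (hf.twiceTailIntegrable.mul_const δ).norm_tailIntegral_tailIntegral_le
    hpointwise hr
  rw [(hf.twiceTailIntegrable_comp hw).tailIntegral_tailIntegral_sub
    (hf.twiceTailIntegrable_comp hv) hr] at htail
  simp only [tailIntegral_mul_const] at htail
  rwa [asymptoticOperator, asymptoticOperator, dist_sub_left, dist_eq_norm]

theorem exists_unique_eqOn_asymptoticOperator [CompleteSpace E] (hf : IsTailLipschitz f ℓ R B)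
    (hℓ : tailIntegral (tailIntegral ℓ) R < 1)
    (hα : ‖α‖ ≤ (1 - tailIntegral (tailIntegral ℓ) R) * B) :
    ∃ w ∈ continuousOnBall E (Ici R) B, EqOn w (asymptoticOperator f α w) (Ici R) ∧
      ∀ v ∈ continuousOnBall E (Ici R) B, EqOn v (asymptoticOperator f α v) (Ici R) →
        EqOn v w (Ici R) :=
  have hB : 0 ≤ B := nonneg_of_mul_nonneg_right ((norm_nonneg α).trans hα) (sub_pos.2 hℓ)
  exists_unique_eqOn_of_contracting hB hf.tailIntegral_tailIntegral_nonneg hℓ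
    (hf.mapsTo_asymptoticOperator hα)
    fun _ hw _ hv _ hwv => hf.dist_asymptoticOperator_le α hw hv hwv

lemma hasDerivAt_of_eqOn_asymptoticOperator [CompleteSpace E] (hf : IsTailLipschitz f ℓ R B)
    (hw : w ∈ continuousOnBall E (Ici R) B) (hfix : EqOn w (asymptoticOperator f α w) (Ici R)) :
    ∀ r ∈ Ioi R, HasDerivAt w (tailIntegral (fun t => f t (w t)) r) r := by
  intro r hr
  have hderiv :=
    ((hf.twiceTailIntegrable_comp hw).hasDerivAt_tailIntegral_tailIntegral hr).const_sub α
  rw [neg_neg] at hderiv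
  exact hderiv.congr_of_eventuallyEq (hfix.eventuallyEq_of_mem (Ici_mem_nhds hr))

lemma hasDerivAt_tailIntegral_comp [CompleteSpace E] (hf : IsTailLipschitz f ℓ R B)
    (hw : w ∈ continuousOnBall E (Ici R) B) :
    ∀ r ∈ Ioi R, HasDerivAt (tailIntegral fun t => f t (w t)) (-f r (w r)) r := fun _ hr =>
  hasDerivAt_tailIntegral (hf.twiceTailIntegrable_comp hw).integrableOn hr
    ((hf.continuousOn_comp hw).continuousAt (Ioi_mem_nhds hr))

end IsTailLipschitz

end AsymptoticProblem

section PowerNonlinearity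

variable {E : Type*} [NormedAddCommGroup E] [NormedSpace ℝ E] {F : ℝ → E → E} {p γ R B : ℝ}

/-- The right-hand side `f` of the equation `w'' = -f(r, w)` satisfied by `w(r) = r u(r)` when `u`
is a radial solution of `-Δu = F(|x|, u)` in `ℝ³`. -/
noncomputable def radialSource (F : ℝ → E → E) (t : ℝ) (x : E) : E := t • F t (t⁻¹ • x)

lemma continuousOn_radialSource
    (hF : ContinuousOn (Function.uncurry F) (Ioi (0 : ℝ) ×ˢ (univ : Set E))) :
    ContinuousOn (Function.uncurry (radialSource F)) (Ioi (0 : ℝ) ×ˢ (univ : Set E)) := by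
  have hscale : ContinuousOn (fun z : ℝ × E => (z.1, z.1⁻¹ • z.2)) (Ioi (0 : ℝ) ×ˢ univ) :=
    continuousOn_fst.prodMk
      ((continuousOn_fst.inv₀ fun z hz => (mem_Ioi.1 hz.1).ne').smul continuousOn_snd)
  exact continuousOn_fst.smul (hF.comp hscale fun z hz => ⟨hz.1, mem_univ _⟩)

lemma norm_radialSource_sub_le (hp : 1 ≤ p) (hγ : 0 ≤ γ)
    (hlip : ∀ r : ℝ, 0 < r → ∀ u v : E,
      ‖F r u - F r v‖ ≤ γ * ‖u - v‖ * (‖u‖ ^ (p - 1) + ‖v‖ ^ (p - 1)))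
    {t : ℝ} (ht : 0 < t) {x y : E} (hx : ‖x‖ ≤ B) (hy : ‖y‖ ≤ B) :
    ‖radialSource F t x - radialSource F t y‖ ≤
      t ^ (1 - p) * (2 * γ * B ^ (p - 1)) * ‖x - y‖ := by
  have hscaled : ∀ z : E, ‖z‖ ≤ B → ‖t⁻¹ • z‖ ^ (p - 1) ≤ t ^ (1 - p) * B ^ (p - 1) := by
    intro z hz
    rw [norm_smul, norm_inv, Real.norm_of_nonneg ht.le,
      Real.mul_rpow (inv_nonneg.2 ht.le) (norm_nonneg z), Real.inv_rpow ht.le,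
      ← Real.rpow_neg ht.le, neg_sub]
    exact mul_le_mul_of_nonneg_left
      (Real.rpow_le_rpow (norm_nonneg z) hz (sub_nonneg.2 hp)) (Real.rpow_nonneg ht.le _)
  calc ‖radialSource F t x - radialSource F t y‖
      = t * ‖F t (t⁻¹ • x) - F t (t⁻¹ • y)‖ := by
        rw [radialSource, radialSource, ← smul_sub, norm_smul, Real.norm_of_nonneg ht.le]
    _ ≤ t * (γ * ‖t⁻¹ • x - t⁻¹ • y‖ * (‖t⁻¹ • x‖ ^ (p - 1) + ‖t⁻¹ • y‖ ^ (p - 1))) := by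
        gcongr
        exact hlip t ht _ _
    _ ≤ t * (γ * (t⁻¹ * ‖x - y‖) * (t ^ (1 - p) * B ^ (p - 1) + t ^ (1 - p) * B ^ (p - 1))) := by
        rw [← smul_sub, norm_smul, norm_inv, Real.norm_of_nonneg ht.le]
        gcongr
        exacts [hscaled x hx, hscaled y hy]
    _ = t ^ (1 - p) * (2 * γ * B ^ (p - 1)) * ‖x - y‖ := by
        field_simp
        ring

lemma isTailLipschitz_radialSource (hp : 3 < p) (hγ : 0 ≤ γ) (hR : 0 < R) (hB : 0 ≤ B)
    (hF : ContinuousOn (Function.uncurry F) (Ioi (0 : ℝ) ×ˢ (univ : Set E)))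
    (hF0 : ∀ r : ℝ, 0 < r → F r 0 = 0)
    (hlip : ∀ r : ℝ, 0 < r → ∀ u v : E,
      ‖F r u - F r v‖ ≤ γ * ‖u - v‖ * (‖u‖ ^ (p - 1) + ‖v‖ ^ (p - 1))) :
    IsTailLipschitz (radialSource F) (fun t => t ^ (1 - p) * (2 * γ * B ^ (p - 1))) R B where
  continuousOn := (continuousOn_radialSource hF).mono
    (prod_mono (Ioi_subset_Ioi hR.le) (subset_univ _))
  map_zero t ht := by rw [radialSource, smul_zero, hF0 t (hR.trans ht), smul_zero]
  norm_map_sub_le t ht _ _ hx hy :=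
    norm_radialSource_sub_le (by linarith) hγ hlip (hR.trans ht) hx hy
  weight_nonneg t ht := by
    have : 0 < t := hR.trans ht
    positivity
  twiceTailIntegrable := (twiceTailIntegrable_rpow (by linarith) hR).mul_const _

lemma tailIntegral_tailIntegral_weight_le (hp : 3 < p) (hR : 0 < R) {a : ℝ} (ha : 0 ≤ a)
    (hsize : 2 ^ (p + 1) * γ * a ^ (p - 1) ≤ (p - 2) * (p - 3) * R ^ (p - 3)) :
    tailIntegral (tailIntegral fun t => t ^ (1 - p) * (2 * γ * (2 * a) ^ (p - 1))) R ≤ 1 / 2 := by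
  have hRp : 0 < R ^ (p - 3) := Real.rpow_pos_of_pos hR _
  have hcoeff : 0 < (p - 2) * (p - 3) := mul_pos (by linarith) (by linarith)
  have hweight : 2 * γ * (2 * a) ^ (p - 1) = 2 ^ (p + 1) * γ * a ^ (p - 1) / 2 := by
    rw [Real.mul_rpow zero_le_two ha, show p + 1 = p - 1 + 2 by ring,
      Real.rpow_add zero_lt_two, Real.rpow_two]
    ring
  simp only [tailIntegral_mul_const]
  rw [tailIntegral_tailIntegral_rpow (by linarith) hR, hweight,
    show 1 - p + 2 = -(p - 3) by ring, show (1 - p + 1) * -(p - 3) = (p - 2) * (p - 3) by ring,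
    Real.rpow_neg hR.le, inv_eq_one_div, div_div, div_mul_div_comm,
    div_le_div_iff₀ (mul_pos (mul_pos hRp hcoeff) zero_lt_two) zero_lt_two]
  linarith

end PowerNonlinearity

theorem ode_fixed_point_general {E : Type*} [NormedAddCommGroup E] [NormedSpace ℝ E]
    [CompleteSpace E] {F : ℝ → E → E} {p γ R : ℝ} {α : E} (hp : 3 < p) (hγ : 0 ≤ γ) (hR : 0 < R)
    (hF : ContinuousOn (Function.uncurry F) (Ioi (0 : ℝ) ×ˢ (univ : Set E)))
    (hF0 : ∀ r : ℝ, 0 < r → F r 0 = 0)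
    (hlip : ∀ r : ℝ, 0 < r → ∀ u v : E,
      ‖F r u - F r v‖ ≤ γ * ‖u - v‖ * (‖u‖ ^ (p - 1) + ‖v‖ ^ (p - 1)))
    (hsize : 2 ^ (p + 1) * γ * ‖α‖ ^ (p - 1) ≤ (p - 2) * (p - 3) * R ^ (p - 3)) :
    ∃ w : ℝ → E,
      (ContinuousOn w (Ici R) ∧ (∀ r ∈ Ici R, ‖w r‖ ≤ 2 * ‖α‖) ∧
        ∀ r ∈ Ici R, w r = α - ∫ s in Ioi r, ∫ τ in Ioi s, τ • F τ (τ⁻¹ • w τ)) ∧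
      (∀ w₂ : ℝ → E,
        (ContinuousOn w₂ (Ici R) ∧ (∀ r ∈ Ici R, ‖w₂ r‖ ≤ 2 * ‖α‖) ∧
          ∀ r ∈ Ici R, w₂ r = α - ∫ s in Ioi r, ∫ τ in Ioi s, τ • F τ (τ⁻¹ • w₂ τ)) →
        ∀ r ∈ Ici R, w₂ r = w r) ∧
      ∃ w' : ℝ → E,
        (∀ r ∈ Ioi R, HasDerivAt w (w' r) r) ∧
        (∀ r ∈ Ioi R, HasDerivAt w' (-(r • F r (r⁻¹ • w r))) r) ∧
        Filter.Tendsto w Filter.atTop (nhds α) ∧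
        Filter.Tendsto w' Filter.atTop (nhds 0) := by
  have hα : 0 ≤ ‖α‖ := norm_nonneg α
  have hf := isTailLipschitz_radialSource hp hγ hR (mul_nonneg zero_le_two hα) hF hF0 hlip
  have hhalf := tailIntegral_tailIntegral_weight_le hp hR hα hsize
  obtain ⟨w, hw, hfix, hunique⟩ :=
    hf.exists_unique_eqOn_asymptoticOperator (α := α) (by linarith) (by nlinarith)
  exact ⟨w, ⟨hw.1, hw.2, hfix⟩, fun v ⟨hvc, hvb, hvfix⟩ => hunique v ⟨hvc, hvb⟩ hvfix,
    tailIntegral fun t => radialSource F t (w t),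
    hf.hasDerivAt_of_eqOn_asymptoticOperator hw hfix, hf.hasDerivAt_tailIntegral_comp hw,
    tendsto_of_eqOn_asymptoticOperator hfix, tendsto_tailIntegral_atTop _⟩

/-- **Construction of non-radiative profiles by ODE fixed point.** Under the energy critical
bounds on `F`, for every `α ≠ 0` and `R ≥ C γ^{1/2} α²` there is a unique continuous
`w : [R,∞) → ℝ` with `|w| ≤ 2|α|` solving the integral equation
`w(r) = α - ∫_r^∞ ∫_s^∞ τ·F(τ, w(τ)/τ) dτ ds`; moreover `w` is twice differentiable with
`w'' = -r·F(r, w/r)` on `(R,∞)`, `w → α` and `w' → 0` at infinity. -/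
theorem ode_fixed_point :
    ∃ C > 0, ∀ γ : ℝ, 0 < γ → ∀ F : ℝ → ℝ → ℝ,
      ContinuousOn (Function.uncurry F) (Ioi (0 : ℝ) ×ˢ (univ : Set ℝ)) →
      (∀ r : ℝ, 0 < r → ∀ u : ℝ, |F r u| ≤ γ * |u| ^ 5) →
      (∀ r : ℝ, 0 < r → ∀ u v : ℝ, |F r u - F r v| ≤ γ * |u - v| * (|u| ^ 4 + |v| ^ 4)) →
      ∀ α : ℝ, α ≠ 0 → ∀ R : ℝ, C * Real.sqrt γ * α ^ 2 ≤ R →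
      ∃ w : ℝ → ℝ,
        (ContinuousOn w (Ici R) ∧ (∀ r ∈ Ici R, |w r| ≤ 2 * |α|) ∧
          ∀ r ∈ Ici R, w r = α - ∫ s in Ioi r, ∫ τ in Ioi s, τ * F τ (w τ / τ)) ∧
        (∀ w₂ : ℝ → ℝ,
          (ContinuousOn w₂ (Ici R) ∧ (∀ r ∈ Ici R, |w₂ r| ≤ 2 * |α|) ∧
            ∀ r ∈ Ici R, w₂ r = α - ∫ s in Ioi r, ∫ τ in Ioi s, τ * F τ (w₂ τ / τ)) →
          ∀ r ∈ Ici R, w₂ r = w r) ∧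
        ∃ w' : ℝ → ℝ,
          (∀ r ∈ Ioi R, HasDerivAt w (w' r) r) ∧
          (∀ r ∈ Ioi R, HasDerivAt w' (-(r * F r (w r / r))) r) ∧
          Filter.Tendsto w Filter.atTop (nhds α) ∧
          Filter.Tendsto w' Filter.atTop (nhds 0) := by
  refine ⟨4, by norm_num, fun γ hγ F hF hgrow hlip α hα R hCR => ?_⟩
  have hR : 0 < R := lt_of_lt_of_le (by positivity) hCR
  have hF0 : ∀ r : ℝ, 0 < r → F r 0 = 0 := fun r hr => by simpa using hgrow r hr 0
  have hsq : 16 * γ * |α| ^ 4 ≤ R ^ 2 := by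
    calc 16 * γ * |α| ^ 4 = (4 * Real.sqrt γ * α ^ 2) ^ 2 := by
          rw [mul_pow, mul_pow, Real.sq_sqrt hγ.le, ← sq_abs α]; ring
      _ ≤ R ^ 2 := by gcongr
  have hsol := ode_fixed_point_general (p := 5) (α := α) (by norm_num) hγ.le hR hF hF0
    (by norm_num; exact hlip) (by norm_num; linarith [sq_nonneg R])
  simpa only [smul_eq_mul, ← div_eq_inv_mul, Real.norm_eq_abs] using hsol
end

section
/- Let (b_k)_{k≥0} be a nonnegative sequence with ∑_{k=0}^∞ b_k⁴ < ∞, let (y_k)_{k≥0} be a nonnegative nonincreasing sequence, and let C > 0, D ≥ 0 be constants such that for every k ≥ 0 one has y_k ≤ C ( 2^{−k/2} D + ∑_{j=0}^{k−1} 2^{−(k−j)/2} b_j⁴ y_j + ∑_{j≥k} b_j⁴ y_j ). Then there exists a constant C′ > 0 (depending on C, D, (b_k) and y₀) such that y_k ≤ C′ 2^{−k/2} for all k ≥ 0. -/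
/-!
Write `a j` for `b j ^ 4` and `r k` for `2 ^ (-k / 2)`. As `y` is nonincreasing, the tail sum
`∑_{j ≥ k} a j * y j` is at most `(∑_{j ≥ k} a j) * y k`, and for large `k` the factor in front of
`y k` is so small that this term can be absorbed into the left-hand side. Dividing what remains by
`r k` turns the kernel `r k / r j` into `1`: the sequence `y k / r k` is eventually bounded by a
constant plus a sum of its previous terms with summable weights, so it is bounded by the discrete
Grönwall inequality.
-/

theorem tsum_mul_le_tsum_mul_of_le {ι : Type*} {a y : ι → ℝ} {M : ℝ} (ha : ∀ i, 0 ≤ a i)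
    (hy : ∀ i, 0 ≤ y i) (hyM : ∀ i, y i ≤ M) (hsum : Summable a) :
    ∑' i, a i * y i ≤ (∑' i, a i) * M := by
  have hle (i : ι) : a i * y i ≤ a i * M := mul_le_mul_of_nonneg_left (hyM i) (ha i)
  have hsumM : Summable fun i => a i * M := hsum.mul_right M
  have hsumy : Summable fun i => a i * y i :=
    hsumM.of_nonneg_of_le (fun i => mul_nonneg (ha i) (hy i)) hle
  exact (hsumy.tsum_le_tsum hle hsumM).trans_eq tsum_mul_right

theorem eventually_le_two_mul_of_le_add_tsum {a f y : ℕ → ℝ} (ha : ∀ k, 0 ≤ a k)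
    (hy : ∀ k, 0 ≤ y k) (hsum : Summable a) (hanti : Antitone y)
    (hrec : ∀ᶠ k in Filter.atTop, y k ≤ f k + ∑' j, a (k + j) * y (k + j)) :
    ∀ᶠ k in Filter.atTop, y k ≤ 2 * f k := by
  have hsmall : ∀ᶠ k in Filter.atTop, ∑' j, a (j + k) ≤ 1 / 2 :=
    (tendsto_sum_nat_add a).eventually_le_const one_half_pos
  filter_upwards [hrec, hsmall] with k hk hak
  simp only [add_comm _ k] at hak
  have htail : ∑' j, a (k + j) * y (k + j) ≤ 1 / 2 * y k :=
    calc ∑' j, a (k + j) * y (k + j)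
        ≤ (∑' j, a (k + j)) * y k :=
          tsum_mul_le_tsum_mul_of_le (fun _ => ha _) (fun _ => hy _)
            (fun j => hanti (Nat.le_add_right k j)) (hsum.comp_injective (add_right_injective k))
      _ ≤ 1 / 2 * y k := mul_le_mul_of_nonneg_right hak (hy k)
  linarith

theorem bddAbove_range_of_eventually_le_add_sum {c u : ℕ → ℝ} {M : ℝ} (hc : ∀ k, 0 ≤ c k)
    (hu : ∀ k, 0 ≤ u k) (hsum : Summable c)
    (h : ∀ᶠ k in Filter.atTop, u k ≤ M + ∑ j ∈ Finset.range k, c j * u j) :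
    BddAbove (Set.range u) := by
  obtain ⟨K, hK⟩ := Filter.eventually_atTop.1 h
  set S : ℕ → ℝ := fun k => M + ∑ j ∈ Finset.range k, c j * u j with hS
  have hSK : 0 ≤ S K := (hu K).trans (hK K le_rfl)
  have hstep : ∀ k ≥ K, S (k + 1) ≤ (1 + c k) * S k + 0 := fun k hk =>
    calc S (k + 1) = S k + c k * u k := by simp only [hS, Finset.sum_range_succ, add_assoc]
      _ ≤ S k + c k * S k := by gcongr; exacts [hc k, hK k hk]
      _ = (1 + c k) * S k + 0 := by ring
  have hbound : ∀ k ≥ K, u k ≤ S K * Real.exp (∑' j, c j) := fun k hk =>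
    calc u k ≤ S k := hK k hk
      _ ≤ S K * Real.exp (∑ j ∈ Finset.Ico K k, c j) := by
        simpa using discrete_gronwall hSK hstep (fun j _ => hc j) (fun _ _ => le_rfl) hk
      _ ≤ S K * Real.exp (∑' j, c j) := by
        gcongr
        exact hsum.sum_le_tsum _ fun j _ => hc j
  exact (Filter.isBoundedUnder_of_eventually_le
    (Filter.eventually_atTop.2 ⟨K, hbound⟩)).bddAbove_range

theorem rpow_neg_sub_div {c : ℝ} (hc : 0 < c) (s t q : ℝ) :
    c ^ (-(s - t) / q) = c ^ (-s / q) / c ^ (-t / q) := by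
  rw [← Real.rpow_sub hc]
  ring_nf

theorem absorption_sequence_lemma_general {a r y : ℕ → ℝ} {C D : ℝ} (ha : ∀ k, 0 ≤ a k)
    (hr : ∀ k, 0 < r k) (hy : ∀ k, 0 ≤ y k) (hsum : Summable a) (hanti : Antitone y) (hC : 0 ≤ C)
    (hrec : ∀ k, y k ≤ C * (r k * D + ∑ j ∈ Finset.range k, r k / r j * a j * y j
        + ∑' j, a (k + j) * y (k + j))) :
    ∃ C' > 0, ∀ k, y k ≤ C' * r k := by
  have habsorb : ∀ᶠ k in Filter.atTop,
      y k ≤ 2 * (C * (r k * D + ∑ j ∈ Finset.range k, r k / r j * a j * y j)) :=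
    eventually_le_two_mul_of_le_add_tsum (fun k => mul_nonneg hC (ha k)) hy (hsum.mul_left C) hanti
      (.of_forall fun k => by simpa only [mul_add, mul_assoc, tsum_mul_left] using hrec k)
  have hratio : ∀ᶠ k in Filter.atTop,
      y k / r k ≤ 2 * C * D + ∑ j ∈ Finset.range k, 2 * C * a j * (y j / r j) := by
    filter_upwards [habsorb] with k hk
    refine (div_le_iff₀ (hr k)).2 (hk.trans_eq ?_)
    simp only [mul_add, add_mul, Finset.mul_sum, Finset.sum_mul]
    congr 1
    · ring
    · exact Finset.sum_congr rfl fun j _ => by ring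
  obtain ⟨B, hB⟩ := bddAbove_range_of_eventually_le_add_sum
    (fun k => mul_nonneg (mul_nonneg zero_le_two hC) (ha k))
    (fun k => div_nonneg (hy k) (hr k).le) (hsum.mul_left (2 * C)) hratio
  refine ⟨max B 1, by positivity, fun k => (div_le_iff₀ (hr k)).1 ?_⟩
  exact (hB (Set.mem_range_self k)).trans (le_max_left B 1)

/-- **Absorption-and-iteration sequence lemma.** If `(b_k)` is nonnegative with `∑ b_k⁴ < ∞`,
`(y_k)` is nonnegative and nonincreasing, and
`y_k ≤ C (2^{-k/2} D + ∑_{j<k} 2^{-(k-j)/2} b_j⁴ y_j + ∑_{j≥k} b_j⁴ y_j)` for all `k`,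
then `y_k ≤ C' 2^{-k/2}` for all `k`. -/
theorem absorption_sequence_lemma (b y : ℕ → ℝ)
    (hb : ∀ k, 0 ≤ b k) (hy : ∀ k, 0 ≤ y k)
    (hsum : Summable (fun k => b k ^ 4))
    (hmono : ∀ k, y (k + 1) ≤ y k)
    (C D : ℝ) (hC : 0 < C) (hD : 0 ≤ D)
    (hrec : ∀ k : ℕ, y k ≤ C * ((2 : ℝ) ^ (-(k : ℝ) / 2) * D
        + ∑ j ∈ Finset.range k, (2 : ℝ) ^ (-((k : ℝ) - (j : ℝ)) / 2) * b j ^ 4 * y j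
        + ∑' j : ℕ, b (k + j) ^ 4 * y (k + j))) :
    ∃ C' > 0, ∀ k : ℕ, y k ≤ C' * (2 : ℝ) ^ (-(k : ℝ) / 2) := by
  simp only [rpow_neg_sub_div two_pos] at hrec
  exact absorption_sequence_lemma_general (fun k => pow_nonneg (hb k) 4)
    (fun k => Real.rpow_pos_of_pos two_pos _) hy hsum (antitone_nat_of_succ_le hmono) hC.le hrec
end

section
/- Let γ > 0 and let F : (0,∞) × ℝ → ℝ be continuous with |F(r,u)| ≤ γ|u|⁵ for all r > 0, u ∈ ℝ. There exists a constant c* > 0 (depending only on γ) with the following property: if r₀ > 0, 0 < c₀ ≤ c*, and w : (0, r₀] → ℝ is twice continuously differentiable with w″(r) = −r·F(r, w(r)/r) for all r ∈ (0, r₀], |w(r)| ≤ 2 c₀ r^{1/2} for all r ∈ (0, r₀], and |w′(r₀)| ≤ c₀ r₀^{−1/2}, then w′(r) converges to a finite limit κ as r → 0⁺, and there exists a constant C > 0 such that |w(r) − κ r| ≤ C r³ for all r ∈ (0, r₀]. -/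
open Set

/-!
On `(0, r₀]` the equation gives `|w''| ≤ γ |w|⁵ / r⁴`. Since `|w| ≤ K r^{1/2}`, the right-hand side
is at most `γ K⁴ |w| / r²`, and for small `K` this linear inequality has two power barriers,
`r^{1/4}` and `r^{3/4}`. As `w = o(r^{1/4})`, a maximum principle for the quotient of `w` by the
barrier forces `w = O(r^{3/4})`. Now `w'' = O(r^{-1/4})` is integrable, so `w'` has a limit `κ` and
`w = O(r)`; the equation then improves to `w'' = O(r)`, and integrating twice yields
`w - κ r = O(r³)`.
-/

open Filter Topology Asymptotics

section PowerBoundedDerivative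

variable {E : Type*} [NormedAddCommGroup E]

lemma tendsto_const_mul_rpow_nhdsGT_zero (C : ℝ) {p : ℝ} (hp : 0 < p) :
    Tendsto (fun r : ℝ => C * r ^ p) (𝓝[>] 0) (𝓝 0) := by
  have hcont : Continuous fun r : ℝ => C * r ^ p :=
    (Real.continuous_rpow_const hp.le).const_mul C
  simpa [Real.zero_rpow hp.ne'] using (hcont.tendsto 0).mono_left nhdsWithin_le_nhds

lemma isLittleO_rpow_rpow_nhdsGT_zero {p q : ℝ} (hpq : p < q) :
    (fun r : ℝ => r ^ q) =o[𝓝[>] 0] fun r => r ^ p := by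
  have hlim : Tendsto (fun r : ℝ => r ^ (q - p)) (𝓝[>] 0) (𝓝 0) := by
    simpa using tendsto_const_mul_rpow_nhdsGT_zero 1 (sub_pos.2 hpq)
  refine (((isLittleO_one_iff ℝ).2 hlim).mul_isBigO (isBigO_refl _ _)).congr' ?_
    (.of_forall fun _ => one_mul _)
  filter_upwards [self_mem_nhdsWithin] with r hr
  rw [← Real.rpow_add hr, sub_add_cancel]

lemma exists_tendsto_of_eventually_dist_le {ι X Y : Type*} [PseudoMetricSpace X]
    [CompleteSpace X] [PseudoMetricSpace Y] {l : Filter ι} [l.NeBot] {f : ι → X} {g : ι → Y}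
    {c : Y} (hg : Tendsto g l (𝓝 c))
    (hfg : ∀ᶠ p in l ×ˢ l, dist (f p.1) (f p.2) ≤ dist (g p.1) (g p.2)) :
    ∃ a, Tendsto f l (𝓝 a) := by
  have hgg : Tendsto (fun p : ι × ι => dist (g p.1) (g p.2)) (l ×ˢ l) (𝓝 0) :=
    tendsto_uniformity_iff_dist_tendsto_zero.1 (cauchy_map_iff.1 hg.cauchy_map).2
  have hff : Tendsto (fun p : ι × ι => dist (f p.1) (f p.2)) (l ×ˢ l) (𝓝 0) :=
    squeeze_zero' (.of_forall fun _ => dist_nonneg) hfg hgg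
  exact CompleteSpace.complete
    (cauchy_map_iff.2 ⟨inferInstance, tendsto_uniformity_iff_dist_tendsto_zero.2 hff⟩)

variable [NormedSpace ℝ E] {f f' : ℝ → E} {b C q : ℝ}

lemma norm_sub_le_of_norm_deriv_le_rpow (hq : q ≠ 0)
    (hf : ∀ r ∈ Ioc 0 b, HasDerivWithinAt f (f' r) (Ioc 0 b) r)
    (hf' : ∀ r ∈ Ioc 0 b, ‖f' r‖ ≤ C * r ^ (q - 1)) {x y : ℝ} (hx : 0 < x) (hxy : x ≤ y)
    (hy : y ≤ b) : ‖f y - f x‖ ≤ C / q * y ^ q - C / q * x ^ q := by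
  have hsub : Icc x y ⊆ Ioc 0 b := fun r hr => ⟨hx.trans_le hr.1, hr.2.trans hy⟩
  have hg : ∀ r ∈ Icc x y,
      HasDerivAt (fun r => C / q * r ^ q - C / q * x ^ q) (C * r ^ (q - 1)) r := fun r hr =>
    (((Real.hasDerivAt_rpow_const (Or.inl (hsub hr).1.ne')).const_mul (C / q)).sub_const
      (C / q * x ^ q)).congr_deriv (by field_simp)
  refine image_norm_le_of_norm_deriv_right_le_deriv_boundary'
    (f := fun r => f r - f x) (f' := f')
    (fun r hr => ((hf r (hsub hr)).continuousWithinAt.mono hsub).sub continuousWithinAt_const)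
    (fun r hr => ?_) (by simp) (fun r hr => (hg r hr).continuousAt.continuousWithinAt)
    (fun r hr => (hg r (Ico_subset_Icc_self hr)).hasDerivWithinAt)
    (fun r hr => hf' r (hsub (Ico_subset_Icc_self hr))) (right_mem_Icc.2 hxy)
  have hr0 : 0 < r := hx.trans_le hr.1
  exact ((hf r (hsub (Ico_subset_Icc_self hr))).hasDerivAt
    (Ioc_mem_nhds hr0 (hr.2.trans_le hy))).hasDerivWithinAt.sub_const (f x)

lemma exists_tendsto_of_norm_deriv_le_rpow [CompleteSpace E] (hb : 0 < b) (hq : 0 < q)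
    (hf : ∀ r ∈ Ioc 0 b, HasDerivWithinAt f (f' r) (Ioc 0 b) r)
    (hf' : ∀ r ∈ Ioc 0 b, ‖f' r‖ ≤ C * r ^ (q - 1)) :
    ∃ l, Tendsto f (𝓝[>] 0) (𝓝 l) := by
  have hmem : ∀ᶠ r in 𝓝[>] (0 : ℝ), r ∈ Ioc 0 b := Ioc_mem_nhdsGT hb
  refine exists_tendsto_of_eventually_dist_le (tendsto_const_mul_rpow_nhdsGT_zero (C / q) hq) ?_
  filter_upwards [hmem.prod_mk hmem] with p ⟨hx, hy⟩
  rcases le_total p.1 p.2 with hle | hle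
  · rw [dist_comm, dist_comm (C / q * _), dist_eq_norm, Real.dist_eq]
    exact (norm_sub_le_of_norm_deriv_le_rpow hq.ne' hf hf' hx.1 hle hy.2).trans (le_abs_self _)
  · rw [dist_eq_norm, Real.dist_eq]
    exact (norm_sub_le_of_norm_deriv_le_rpow hq.ne' hf hf' hy.1 hle hx.2).trans (le_abs_self _)

lemma norm_sub_le_rpow_of_tendsto {l : E} (hq : 0 < q)
    (hf : ∀ r ∈ Ioc 0 b, HasDerivWithinAt f (f' r) (Ioc 0 b) r)
    (hf' : ∀ r ∈ Ioc 0 b, ‖f' r‖ ≤ C * r ^ (q - 1)) (hl : Tendsto f (𝓝[>] 0) (𝓝 l)) :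
    ∀ r ∈ Ioc 0 b, ‖f r - l‖ ≤ C / q * r ^ q := by
  intro r hr
  have hright : Tendsto (fun x => C / q * r ^ q - C / q * x ^ q) (𝓝[>] 0) (𝓝 (C / q * r ^ q)) := by
    simpa using tendsto_const_nhds.sub (tendsto_const_mul_rpow_nhdsGT_zero (C / q) hq)
  refine le_of_tendsto_of_tendsto (tendsto_const_nhds.sub hl).norm hright ?_
  filter_upwards [Ioc_mem_nhdsGT hr.1] with x hx
  exact norm_sub_le_of_norm_deriv_le_rpow hq.ne' hf hf' hx.1 hx.2 hr.2

lemma norm_sub_sub_smul_le_rpow {f'' : ℝ → E} {l κ : E} (hq : 0 < q)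
    (hf : ∀ r ∈ Ioc 0 b, HasDerivWithinAt f (f' r) (Ioc 0 b) r)
    (hf' : ∀ r ∈ Ioc 0 b, HasDerivWithinAt f' (f'' r) (Ioc 0 b) r)
    (hf'' : ∀ r ∈ Ioc 0 b, ‖f'' r‖ ≤ C * r ^ (q - 1))
    (hl : Tendsto f (𝓝[>] 0) (𝓝 l)) (hκ : Tendsto f' (𝓝[>] 0) (𝓝 κ)) :
    ∀ r ∈ Ioc 0 b, ‖f r - l - r • κ‖ ≤ C / (q * (q + 1)) * r ^ (q + 1) := by
  have hderiv : ∀ r ∈ Ioc 0 b,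
      HasDerivWithinAt (fun r => f r - r • κ) (f' r - κ) (Ioc 0 b) r := fun r hr => by
    simpa using (hf r hr).fun_sub ((hasDerivWithinAt_id r (Ioc 0 b)).smul_const κ)
  have hlim : Tendsto (fun r : ℝ => f r - r • κ) (𝓝[>] 0) (𝓝 l) := by
    have hid : Tendsto (fun r : ℝ => r) (𝓝[>] 0) (𝓝 0) := nhdsWithin_le_nhds
    simpa using hl.sub (hid.smul_const κ)
  have hbound : ∀ r ∈ Ioc 0 b, ‖f' r - κ‖ ≤ C / q * r ^ (q + 1 - 1) := by
    simpa using norm_sub_le_rpow_of_tendsto hq hf' hf'' hκ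
  intro r hr
  simpa only [sub_right_comm, div_div] using
    norm_sub_le_rpow_of_tendsto (add_pos hq one_pos) hderiv hbound hlim r hr

lemma exists_norm_le_mul_of_norm_sub_smul_le {κ : E} (hq : 0 ≤ q)
    (hf : ∀ r ∈ Ioc 0 b, ‖f r - r • κ‖ ≤ C * r ^ (q + 1)) :
    ∃ M, ∀ r ∈ Ioc 0 b, ‖f r‖ ≤ M * r := by
  refine ⟨‖κ‖ + |C| * b ^ q, fun r hr => ?_⟩
  have hr0 : 0 < r := hr.1
  calc ‖f r‖ ≤ ‖r • κ‖ + ‖f r - r • κ‖ := norm_le_insert' _ _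
    _ ≤ ‖κ‖ * r + |C| * b ^ q * r := by
      rw [norm_smul, Real.norm_of_nonneg hr0.le, mul_comm r]
      gcongr
      calc ‖f r - r • κ‖ ≤ C * r ^ (q + 1) := hf r hr
        _ ≤ |C| * r ^ (q + 1) := by gcongr; exact le_abs_self C
        _ = |C| * r ^ q * r := by rw [Real.rpow_add_one hr0.ne', mul_assoc]
        _ ≤ |C| * b ^ q * r := by gcongr; exact hr.2
    _ = (‖κ‖ + |C| * b ^ q) * r := by ring

end PowerBoundedDerivative

lemma second_deriv_nonpos_of_isLocalMax {h h' : ℝ → ℝ} {d x : ℝ} (hmax : IsLocalMax h x)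
    (hh : ∀ᶠ r in 𝓝 x, HasDerivAt h (h' r) r) (hh' : HasDerivAt h' d x) : d ≤ 0 := by
  by_contra! hd
  have hderiv : deriv h =ᶠ[𝓝 x] h' := hh.mono fun r hr => hr.deriv
  have hderiv₂ : deriv (deriv h) x = d := hderiv.deriv_eq.trans hh'.deriv
  have hmin : IsLocalMin h x := isLocalMin_of_deriv_deriv_pos (by rwa [hderiv₂])
    hmax.deriv_eq_zero hh.self_of_nhds.continuousAt
  have hconst : h =ᶠ[𝓝 x] fun _ => h x := by
    filter_upwards [hmax, hmin] with y hle hge using le_antisymm hle hge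
  have hzero : deriv (deriv h) x = 0 := by
    rw [hconst.deriv.deriv_eq]
    simp
  exact hd.ne (hzero.symm.trans hderiv₂)

lemma le_of_mul_second_deriv_lt {u u' u'' ψ ψ' ψ'' : ℝ → ℝ} {a b : ℝ}
    (hu : ContinuousOn u (Icc a b)) (hψ : ContinuousOn ψ (Icc a b))
    (hu' : ∀ x ∈ Ioo a b, HasDerivAt u (u' x) x) (hψ' : ∀ x ∈ Ioo a b, HasDerivAt ψ (ψ' x) x)
    (hu'' : ∀ x ∈ Ioo a b, HasDerivAt u' (u'' x) x)
    (hψ'' : ∀ x ∈ Ioo a b, HasDerivAt ψ' (ψ'' x) x)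
    (hpos : ∀ x ∈ Icc a b, 0 < ψ x) (ha : u a ≤ ψ a) (hb : u b ≤ ψ b)
    (hlt : ∀ x ∈ Ioo a b, ψ x < u x → u x * ψ'' x < u'' x * ψ x) :
    ∀ x ∈ Icc a b, u x ≤ ψ x := by
  intro r hr
  by_contra! hur
  obtain ⟨x, hx, hxmax⟩ := isCompact_Icc.exists_isMaxOn ⟨r, hr⟩
    (hu.div hψ fun s hs => (hpos s hs).ne')
  have hux : ψ x < u x := (one_lt_div (hpos x hx)).1
    (((one_lt_div (hpos r hr)).2 hur).trans_le (hxmax hr))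
  have hxab : x ∈ Ioo a b :=
    ⟨hx.1.lt_of_ne (by rintro rfl; exact hux.not_ge ha),
      hx.2.lt_of_ne (by rintro rfl; exact hux.not_ge hb)⟩
  have hnhds : Ioo a b ∈ 𝓝 x := Ioo_mem_nhds hxab.1 hxab.2
  set m := u x / ψ x
  have hmax : IsLocalMax (fun s => u s - m * ψ s) x := by
    filter_upwards [hnhds] with s hs
    have hle : u s ≤ m * ψ s :=
      (div_le_iff₀ (hpos s (Ioo_subset_Icc_self hs))).1 (hxmax (Ioo_subset_Icc_self hs))
    have heq : m * ψ x = u x := div_mul_cancel₀ _ (hpos x hx).ne'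
    linarith
  have hsecond : u'' x - m * ψ'' x ≤ 0 := second_deriv_nonpos_of_isLocalMax hmax
    (by filter_upwards [hnhds] with s hs using (hu' s hs).sub ((hψ' s hs).const_mul m))
    ((hu'' x hxab).sub ((hψ'' x hxab).const_mul m))
  have hle : u'' x ≤ u x * ψ'' x / ψ x := by
    rw [mul_div_right_comm]
    exact sub_nonpos.1 hsecond
  exact (hlt x hxab hux).not_ge ((le_div_iff₀ (hpos x hx)).1 hle)

section EulerBarrier

/-- The combinations `δ r^{1-α} + A r^α` of the two power solutions of Euler's equation
`ψ'' = -α(1-α) ψ / r²` on `(0, ∞)`, used as barriers; `A` is the coefficient that survives in the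
final bound, while `δ` is sent to `0`. -/
noncomputable def eulerBarrier (α δ A r : ℝ) : ℝ := δ * r ^ (1 - α) + A * r ^ α

/-- The derivative of `eulerBarrier α δ A` on `(0, ∞)`. -/
noncomputable def eulerBarrierDeriv (α δ A r : ℝ) : ℝ :=
  δ * ((1 - α) * r ^ (1 - α - 1)) + A * (α * r ^ (α - 1))

lemma hasDerivAt_eulerBarrier (α δ A : ℝ) {r : ℝ} (hr : 0 < r) :
    HasDerivAt (eulerBarrier α δ A) (eulerBarrierDeriv α δ A r) r :=
  ((Real.hasDerivAt_rpow_const (Or.inl hr.ne')).const_mul δ).add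
    ((Real.hasDerivAt_rpow_const (Or.inl hr.ne')).const_mul A)

lemma hasDerivAt_eulerBarrierDeriv (α δ A : ℝ) {r : ℝ} (hr : 0 < r) :
    HasDerivAt (eulerBarrierDeriv α δ A) (-(α * (1 - α) * eulerBarrier α δ A r / r ^ 2)) r := by
  have hpow (p : ℝ) :
      HasDerivAt (fun s : ℝ => p * s ^ (p - 1)) (-(p * (1 - p) * r ^ p / r ^ 2)) r :=
    ((Real.hasDerivAt_rpow_const (Or.inl hr.ne')).const_mul p).congr_deriv <| by
      rw [sub_sub, one_add_one_eq_two, Real.rpow_sub hr, Real.rpow_two]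
      ring
  refine (((hpow (1 - α)).const_mul δ).add ((hpow α).const_mul A)).congr_deriv ?_
  rw [eulerBarrier]
  ring

variable {u u' u'' : ℝ → ℝ} {b ε α δ A : ℝ}

lemma eulerBarrier_pos (hδ : 0 < δ) (hA : 0 ≤ A) {r : ℝ} (hr : 0 < r) :
    0 < eulerBarrier α δ A r := by
  unfold eulerBarrier
  positivity

lemma exists_le_eulerBarrier_of_isLittleO (hδ : 0 < δ) (hA : 0 ≤ A)
    (hu : u =o[𝓝[>] 0] fun r => r ^ (1 - α)) {r : ℝ} (hr : 0 < r) :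
    ∃ a ∈ Ioo 0 r, u a ≤ eulerBarrier α δ A a := by
  obtain ⟨a, hua, ha⟩ := ((hu.bound hδ).and (Ioo_mem_nhdsGT hr)).exists
  have ha0 : 0 < a := ha.1
  refine ⟨a, ha, ?_⟩
  calc u a ≤ δ * ‖a ^ (1 - α)‖ := (le_abs_self _).trans hua
    _ = δ * a ^ (1 - α) := by rw [Real.norm_of_nonneg (by positivity)]
    _ ≤ eulerBarrier α δ A a := le_add_of_nonneg_right (by positivity)

lemma le_eulerBarrier_of_subsolution (hε : ε < α * (1 - α)) (hδ : 0 < δ) (hA : 0 ≤ A)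
    (hu : ∀ r ∈ Ioc 0 b, HasDerivWithinAt u (u' r) (Ioc 0 b) r)
    (hu' : ∀ r ∈ Ioc 0 b, HasDerivWithinAt u' (u'' r) (Ioc 0 b) r)
    (hsub : ∀ r ∈ Ioo 0 b, 0 < u r → -(ε * u r / r ^ 2) ≤ u'' r)
    (hu0 : u =o[𝓝[>] 0] fun r => r ^ (1 - α)) (hub : u b ≤ A * b ^ α) :
    ∀ r ∈ Ioc 0 b, u r ≤ eulerBarrier α δ A r := by
  intro r hr
  obtain ⟨a, ⟨ha0, har⟩, hua⟩ := exists_le_eulerBarrier_of_isLittleO hδ hA hu0 hr.1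
  have hb : 0 < b := hr.1.trans_le hr.2
  have hIcc : Icc a b ⊆ Ioc 0 b := fun s hs => ⟨ha0.trans_le hs.1, hs.2⟩
  have hIoo : Ioo a b ⊆ Ioo 0 b := Ioo_subset_Ioo_left ha0.le
  have hnhds : ∀ s ∈ Ioo a b, Ioc 0 b ∈ 𝓝 s := fun s hs => Ioc_mem_nhds (hIoo hs).1 hs.2
  have hends : u b ≤ eulerBarrier α δ A b := hub.trans (le_add_of_nonneg_left (by positivity))
  refine le_of_mul_second_deriv_lt
    (fun s hs => (hu s (hIcc hs)).continuousWithinAt.mono hIcc)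
    (fun s hs => (hasDerivAt_eulerBarrier α δ A (hIcc hs).1).continuousAt.continuousWithinAt)
    (fun s hs => (hu s (Ioo_subset_Ioc_self (hIoo hs))).hasDerivAt (hnhds s hs))
    (fun s hs => hasDerivAt_eulerBarrier α δ A (hIoo hs).1)
    (fun s hs => (hu' s (Ioo_subset_Ioc_self (hIoo hs))).hasDerivAt (hnhds s hs))
    (fun s hs => hasDerivAt_eulerBarrierDeriv α δ A (hIoo hs).1)
    (fun s hs => eulerBarrier_pos hδ hA (hIcc hs).1) hua hends ?_ r ⟨har.le, hr.2⟩
  intro s hs hψu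
  have hs0 : 0 < s := (hIoo hs).1
  have hψ : 0 < eulerBarrier α δ A s := eulerBarrier_pos hδ hA hs0
  have hus : 0 < u s := hψ.trans hψu
  calc u s * -(α * (1 - α) * eulerBarrier α δ A s / s ^ 2)
      = -(α * (1 - α) * u s / s ^ 2) * eulerBarrier α δ A s := by ring
    _ < -(ε * u s / s ^ 2) * eulerBarrier α δ A s := by gcongr
    _ ≤ u'' s * eulerBarrier α δ A s := by gcongr; exact hsub s (hIoo hs) hus

lemma le_mul_rpow_of_subsolution (hε : ε < α * (1 - α)) (hA : 0 ≤ A)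
    (hu : ∀ r ∈ Ioc 0 b, HasDerivWithinAt u (u' r) (Ioc 0 b) r)
    (hu' : ∀ r ∈ Ioc 0 b, HasDerivWithinAt u' (u'' r) (Ioc 0 b) r)
    (hsub : ∀ r ∈ Ioo 0 b, 0 < u r → -(ε * u r / r ^ 2) ≤ u'' r)
    (hu0 : u =o[𝓝[>] 0] fun r => r ^ (1 - α)) (hub : u b ≤ A * b ^ α) :
    ∀ r ∈ Ioc 0 b, u r ≤ A * r ^ α := by
  intro r hr
  have hlim : Tendsto (fun δ => eulerBarrier α δ A r) (𝓝[>] 0) (𝓝 (A * r ^ α)) := by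
    have hcont : Continuous fun δ => eulerBarrier α δ A r := by
      unfold eulerBarrier
      fun_prop
    simpa [eulerBarrier] using (hcont.tendsto 0).mono_left nhdsWithin_le_nhds
  refine ge_of_tendsto hlim ?_
  filter_upwards [self_mem_nhdsWithin] with δ hδ
  exact le_eulerBarrier_of_subsolution hε hδ hA hu hu' hsub hu0 hub r hr

lemma exists_abs_le_mul_rpow (hb : 0 < b) (hε : ε < α * (1 - α))
    (hu : ∀ r ∈ Ioc 0 b, HasDerivWithinAt u (u' r) (Ioc 0 b) r)
    (hu' : ∀ r ∈ Ioc 0 b, HasDerivWithinAt u' (u'' r) (Ioc 0 b) r)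
    (hode : ∀ r ∈ Ioc 0 b, |u'' r| ≤ ε * |u r| / r ^ 2)
    (hu0 : u =o[𝓝[>] 0] fun r => r ^ (1 - α)) :
    ∃ A, ∀ r ∈ Ioc 0 b, |u r| ≤ A * r ^ α := by
  set A := |u b| / b ^ α
  have hA : 0 ≤ A := by positivity
  have hAb : A * b ^ α = |u b| := div_mul_cancel₀ _ (Real.rpow_pos_of_pos hb α).ne'
  refine ⟨A, fun r hr => abs_le'.2 ⟨?_, ?_⟩⟩
  · refine le_mul_rpow_of_subsolution hε hA hu hu' (fun s hs hpos => ?_) hu0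
      (hAb ▸ le_abs_self _) r hr
    simpa [abs_of_pos hpos] using neg_le_of_abs_le (hode s (Ioo_subset_Ioc_self hs))
  · refine le_mul_rpow_of_subsolution (u := fun s => -u s) (u' := fun s => -u' s)
      (u'' := fun s => -u'' s) hε hA (fun s hs => (hu s hs).neg) (fun s hs => (hu' s hs).neg)
      (fun s hs hpos => ?_) hu0.neg_left (hAb ▸ neg_le_abs _) r hr
    have hneg : |u s| = -u s := abs_of_neg (neg_pos.1 hpos)
    simpa [hneg] using (le_abs_self _).trans (hode s (Ioo_subset_Ioc_self hs))

end EulerBarrier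

section QuinticSource

variable {b γ A α K : ℝ}

lemma mul_pow_five_div_le_rpow {x r : ℝ} (hγ : 0 ≤ γ) (hr : 0 < r) (hx : 0 ≤ x)
    (hxA : x ≤ A * r ^ α) : γ * x ^ 5 / r ^ 4 ≤ γ * A ^ 5 * r ^ (5 * α - 4) := by
  calc γ * x ^ 5 / r ^ 4 ≤ γ * (A * r ^ α) ^ 5 / r ^ 4 := by gcongr
    _ = γ * A ^ 5 * ((r ^ α) ^ 5 / r ^ 4) := by ring
    _ = γ * A ^ 5 * r ^ (5 * α - 4) := by
      rw [Real.rpow_sub hr, mul_comm 5 α, Real.rpow_mul hr.le, Real.rpow_ofNat, Real.rpow_ofNat]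

lemma mul_pow_five_div_le_of_le_sqrt {x r : ℝ} (hγ : 0 ≤ γ) (hr : 0 < r) (hx : 0 ≤ x)
    (hxK : x ≤ K * √r) : γ * x ^ 5 / r ^ 4 ≤ γ * K ^ 4 * x / r ^ 2 := by
  have hsqrt : √r ^ 4 = r ^ 2 := by rw [show 4 = 2 * 2 from rfl, pow_mul, Real.sq_sqrt hr.le]
  calc γ * x ^ 5 / r ^ 4 = γ * x ^ 4 * x / r ^ 4 := by ring
    _ ≤ γ * (K * √r) ^ 4 * x / r ^ 4 := by gcongr
    _ = γ * K ^ 4 * x / r ^ 2 := by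
      rw [mul_pow, hsqrt]
      field_simp

lemma abs_mul_apply_div_le {F : ℝ → ℝ → ℝ} (hF : ∀ r : ℝ, 0 < r → ∀ u : ℝ, |F r u| ≤ γ * |u| ^ 5)
    {r : ℝ} (hr : 0 < r) (x : ℝ) : |r * F r (x / r)| ≤ γ * |x| ^ 5 / r ^ 4 := by
  calc |r * F r (x / r)| = r * |F r (x / r)| := by rw [abs_mul, abs_of_pos hr]
    _ ≤ r * (γ * |x / r| ^ 5) := by gcongr; exact hF r hr _
    _ = γ * |x| ^ 5 / r ^ 4 := by
      rw [abs_div, abs_of_pos hr]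
      field_simp

lemma isLittleO_rpow_of_abs_le_sqrt {w : ℝ → ℝ} {p : ℝ} (hb : 0 < b) (hp : p < 1 / 2)
    (hw : ∀ r ∈ Ioc 0 b, |w r| ≤ K * √r) : w =o[𝓝[>] 0] fun r => r ^ p := by
  have hbig : w =O[𝓝[>] 0] fun r => √r := by
    refine .of_bound K ?_
    filter_upwards [Ioc_mem_nhdsGT hb] with r hr
    rw [Real.norm_of_nonneg (Real.sqrt_nonneg r)]
    exact hw r hr
  simp only [Real.sqrt_eq_rpow] at hbig
  exact hbig.trans_isLittleO (isLittleO_rpow_rpow_nhdsGT_zero hp)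

lemma exists_tendsto_deriv_and_norm_sub_smul_le_cube {E : Type*} [NormedAddCommGroup E]
    [NormedSpace ℝ E] [CompleteSpace E] {w w' w'' : ℝ → E} (hb : 0 < b) (hγ : 0 ≤ γ)
    (hα : 3 / 5 < α) (hw : ∀ r ∈ Ioc 0 b, HasDerivWithinAt w (w' r) (Ioc 0 b) r)
    (hw' : ∀ r ∈ Ioc 0 b, HasDerivWithinAt w' (w'' r) (Ioc 0 b) r)
    (hode : ∀ r ∈ Ioc 0 b, ‖w'' r‖ ≤ γ * ‖w r‖ ^ 5 / r ^ 4)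
    (hA : ∀ r ∈ Ioc 0 b, ‖w r‖ ≤ A * r ^ α) :
    ∃ κ, Tendsto w' (𝓝[>] 0) (𝓝 κ) ∧ ∃ C > 0, ∀ r ∈ Ioc 0 b, ‖w r - r • κ‖ ≤ C * r ^ 3 := by
  have source_le {M β : ℝ} (hM : ∀ r ∈ Ioc 0 b, ‖w r‖ ≤ M * r ^ β) :
      ∀ r ∈ Ioc 0 b, ‖w'' r‖ ≤ γ * M ^ 5 * r ^ (5 * β - 3 - 1) := fun r hr => by
    rw [show 5 * β - 3 - 1 = 5 * β - 4 by ring]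
    exact (hode r hr).trans (mul_pow_five_div_le_rpow hγ hr.1 (norm_nonneg _) (hM r hr))
  have hw0 : Tendsto w (𝓝[>] 0) (𝓝 0) :=
    squeeze_zero_norm' (eventually_of_mem (Ioc_mem_nhdsGT hb) hA)
      (tendsto_const_mul_rpow_nhdsGT_zero A (by linarith))
  have hα' : 0 < 5 * α - 3 := by linarith
  obtain ⟨κ, hκ⟩ := exists_tendsto_of_norm_deriv_le_rpow hb hα' hw' (source_le hA)
  have expansion {C q : ℝ} (hq : 0 < q) (hC : ∀ r ∈ Ioc 0 b, ‖w'' r‖ ≤ C * r ^ (q - 1)) :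
      ∀ r ∈ Ioc 0 b, ‖w r - r • κ‖ ≤ C / (q * (q + 1)) * r ^ (q + 1) := by
    simpa only [sub_zero] using norm_sub_sub_smul_le_rpow hq hw hw' hC hw0 hκ
  obtain ⟨M, hM⟩ := exists_norm_le_mul_of_norm_sub_smul_le hα'.le (expansion hα' (source_le hA))
  have hw''M : ∀ r ∈ Ioc 0 b, ‖w'' r‖ ≤ γ * M ^ 5 * r ^ ((2 : ℝ) - 1) := by
    convert source_le (M := M) (β := 1) (by simpa using hM) using 4
    norm_num
  refine ⟨κ, hκ, max (γ * M ^ 5 / 6) 1, by positivity, fun r hr => ?_⟩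
  have hr0 : 0 < r := hr.1
  calc ‖w r - r • κ‖ ≤ γ * M ^ 5 / (2 * (2 + 1)) * r ^ (2 + 1 : ℝ) :=
        expansion two_pos hw''M r hr
    _ = γ * M ^ 5 / 6 * r ^ 3 := by norm_num
    _ ≤ max (γ * M ^ 5 / 6) 1 * r ^ 3 := by gcongr; exact le_max_left _ _

end QuinticSource

lemma exists_forall_mem_Ioc_lt_of_continuousAt {f : ℝ → ℝ} {a η : ℝ} (hf : ContinuousAt f a)
    (ha : f a < η) : ∃ c > a, ∀ x ∈ Ioc a c, f x < η := by
  have hlt : ∀ᶠ x in 𝓝[>] a, f x < η := nhdsWithin_le_nhds (hf.eventually_lt_const ha)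
  exact mem_nhdsGT_iff_exists_Ioc_subset.1 hlt

-- The value `3 / 16` is `α (1 - α)` for the barrier exponent `α = 3 / 4`.
theorem origin_regularity_general {γ K r₀ : ℝ} (hK : γ * K ^ 4 < 3 / 16) (hr₀ : 0 < r₀)
    {F : ℝ → ℝ → ℝ} (hF : ∀ r : ℝ, 0 < r → ∀ u : ℝ, |F r u| ≤ γ * |u| ^ 5) {w w' : ℝ → ℝ}
    (hw : ∀ r ∈ Ioc 0 r₀, HasDerivWithinAt w (w' r) (Ioc 0 r₀) r)
    (hw' : ∀ r ∈ Ioc 0 r₀, HasDerivWithinAt w' (-(r * F r (w r / r))) (Ioc 0 r₀) r)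
    (hwK : ∀ r ∈ Ioc 0 r₀, |w r| ≤ K * √r) :
    ∃ κ, Tendsto w' (𝓝[>] 0) (𝓝 κ) ∧
      ∃ C > 0, ∀ r ∈ Ioc 0 r₀, |w r - κ * r| ≤ C * r ^ 3 := by
  have hγ : 0 ≤ γ := by simpa using (abs_nonneg _).trans (hF 1 one_pos 1)
  have hsource : ∀ r ∈ Ioc 0 r₀, |-(r * F r (w r / r))| ≤ γ * |w r| ^ 5 / r ^ 4 := fun r hr =>
    (abs_neg _).trans_le (abs_mul_apply_div_le hF hr.1 (w r))
  have hlinear : ∀ r ∈ Ioc 0 r₀, |-(r * F r (w r / r))| ≤ γ * K ^ 4 * |w r| / r ^ 2 :=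
    fun r hr => (hsource r hr).trans
      (mul_pow_five_div_le_of_le_sqrt hγ hr.1 (abs_nonneg _) (hwK r hr))
  obtain ⟨A, hA⟩ := exists_abs_le_mul_rpow (α := 3 / 4) hr₀ (by linarith) hw hw' hlinear
    (isLittleO_rpow_of_abs_le_sqrt hr₀ (by norm_num) hwK)
  simpa only [smul_eq_mul, mul_comm, Real.norm_eq_abs] using
    exists_tendsto_deriv_and_norm_sub_smul_le_cube hr₀ hγ (by norm_num) hw hw' hsource hA

/-- **Regularity at the origin of scattering non-radiative profiles.** Let `|F(r,u)| ≤ γ|u|⁵`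
with `F` continuous. There is `c* > 0`, depending only on `γ`, such that any C² solution of
`w'' = -r·F(r, w/r)` on `(0,r₀]` with `|w(r)| ≤ 2c₀ r^{1/2}` and `|w'(r₀)| ≤ c₀ r₀^{-1/2}`
for some `0 < c₀ ≤ c*` has `w'(r) → κ` as `r → 0⁺`, and `|w(r) - κr| ≤ C r³` on `(0,r₀]`. -/
theorem origin_regularity (γ : ℝ) (hγ : 0 < γ) :
    ∃ cstar > 0, ∀ F : ℝ → ℝ → ℝ,
      ContinuousOn (Function.uncurry F) (Ioi (0 : ℝ) ×ˢ (univ : Set ℝ)) →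
      (∀ r : ℝ, 0 < r → ∀ u : ℝ, |F r u| ≤ γ * |u| ^ 5) →
      ∀ r₀ : ℝ, 0 < r₀ → ∀ c₀ : ℝ, 0 < c₀ → c₀ ≤ cstar →
      ∀ w w' : ℝ → ℝ,
      (∀ r ∈ Ioc (0 : ℝ) r₀, HasDerivWithinAt w (w' r) (Ioc (0 : ℝ) r₀) r) →
      (∀ r ∈ Ioc (0 : ℝ) r₀,
        HasDerivWithinAt w' (-(r * F r (w r / r))) (Ioc (0 : ℝ) r₀) r) →
      (∀ r ∈ Ioc (0 : ℝ) r₀, |w r| ≤ 2 * c₀ * Real.sqrt r) →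
      |w' r₀| ≤ c₀ / Real.sqrt r₀ →
      ∃ κ : ℝ, Filter.Tendsto w' (nhdsWithin 0 (Ioi 0)) (nhds κ) ∧
        ∃ C > 0, ∀ r ∈ Ioc (0 : ℝ) r₀, |w r - κ * r| ≤ C * r ^ 3 := by
  obtain ⟨c, hc, hsmall⟩ := exists_forall_mem_Ioc_lt_of_continuousAt (a := 0) (η := 3 / 16)
    (f := fun x => γ * (2 * x) ^ 4) (by fun_prop) (by norm_num)
  exact ⟨c, hc, fun F _ hF r₀ hr₀ c₀ hc₀ hle w w' hw hw' hK _ =>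
    origin_regularity_general (hsmall c₀ ⟨hc₀, hle⟩) hr₀ hF hw hw' hK⟩
end
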